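/- arXiv:1811.08946 — 4 statements merged into one kernel-verified Lean document; each statement's English description precedes it below -/
import Mathlib

section
/- Let k be a field, S and T totally ordered sets, and M a pointwise finite-dimensional persistence module over S × T such that for all x ≤ x' in S and y ≤ y' in T, with a = (x,y), b = (x,y'), c = (x',y), d = (x',y'), the sequence 0 → M_a → M_b ⊕ M_c → M_d → 0 is short exact. Then (Ker M^→) ∩ (Ker M^↑) = 0 and M = (Im M^←) + (Im M^↓), where these four submodules of M are defined pointwise by: (Im M^←)_{(p₁,p₂)} = ⋂_{q ≤ p₁} Im(M_{(q,p₂)} → M_{(p₁,p₂)}), (Im M^↓)_{(p₁,p₂)} = ⋂_{q ≤ p₂} Im(M_{(p₁,q)} → M_{(p₁,p₂)}), (Ker M^→)_{(p₁,p₂)} = ⋃_{q ≥ p₁} Ker(M_{(p₁,p₂)} → M_{(q,p₂)}), (Ker M^↑)_{(p₁,p₂)} = ⋃_{q ≥ p₂} Ker(M_{(p₁,p₂)} → M_{(p₁,q)}). -/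
namespace PMod

variable (k : Type) [Field k]

/-- A persistence module over a preordered set `P` with values in `k`-vector spaces. -/
structure PersistenceModule (P : Type) [Preorder P] where
  V : P → Type
  [addCommGroup : ∀ x, AddCommGroup (V x)]
  [module : ∀ x, Module k (V x)]
  map : ∀ {x y : P}, x ≤ y → (V x →ₗ[k] V y)
  map_refl : ∀ x : P, map (le_refl x) = LinearMap.id
  map_trans : ∀ {x y z : P} (hxy : x ≤ y) (hyz : y ≤ z),
      map (le_trans hxy hyz) = (map hyz).comp (map hxy)

attribute [instance] PersistenceModule.addCommGroup PersistenceModule.module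

variable {k}

/-- A morphism of persistence modules. -/
structure Hom {P : Type} [Preorder P] (M N : PersistenceModule k P) where
  app : ∀ x, M.V x →ₗ[k] N.V x
  natural : ∀ {x y : P} (h : x ≤ y), (N.map h).comp (app x) = (app y).comp (M.map h)

/-- A morphism of persistence modules is an isomorphism iff it is pointwise bijective. -/
def IsIsoHom {P : Type} [Preorder P] {M N : PersistenceModule k P} (f : Hom M N) : Prop :=
  ∀ x, Function.Bijective (f.app x)

/-- Two persistence modules are isomorphic if there is a pointwise bijective
morphism between them. -/
def Isomorphic {P : Type} [Preorder P] (M N : PersistenceModule k P) : Prop :=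
  ∃ f : Hom M N, IsIsoHom f

/-- The direct sum of a family of persistence modules, taken pointwise
(`Π₀` is the finitely supported product, i.e. the direct sum). -/
noncomputable def directSum {P : Type} [Preorder P] {ι : Type}
    (N : ι → PersistenceModule k P) : PersistenceModule k P where
  V x := Π₀ i, (N i).V x
  map {x y} h := DFinsupp.mapRange.linearMap (fun i => (N i).map h)
  map_refl x := by
    have h : (fun i => (N i).map (le_refl x)) =
        fun i => (LinearMap.id : (N i).V x →ₗ[k] (N i).V x) :=
      funext fun i => (N i).map_refl x
    rw [h]
    exact DFinsupp.mapRange.linearMap_id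
  map_trans {x y z} hxy hyz := by
    have h : (fun i => (N i).map (le_trans hxy hyz)) =
        fun i => ((N i).map hyz).comp ((N i).map hxy) :=
      funext fun i => (N i).map_trans hxy hyz
    rw [h]
    exact DFinsupp.mapRange.linearMap_comp _ _

/-- The binary direct sum of two persistence modules, taken pointwise. -/
def sum2 {P : Type} [Preorder P] (M N : PersistenceModule k P) : PersistenceModule k P where
  V x := M.V x × N.V x
  map h := (M.map h).prodMap (N.map h)
  map_refl x := by
    rw [M.map_refl, N.map_refl]
    exact LinearMap.prodMap_id
  map_trans hxy hyz := by
    rw [M.map_trans hxy hyz, N.map_trans hxy hyz]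
    exact (LinearMap.prodMap_comp _ _ _ _).symm

/-- The zero persistence module predicate. -/
def IsZero {P : Type} [Preorder P] (M : PersistenceModule k P) : Prop :=
  ∀ x, ∀ v : M.V x, v = 0

/-- A persistence module is indecomposable if it is nonzero and whenever it is
isomorphic to a direct sum of two modules, one of the summands is zero. -/
def Indecomposable {P : Type} [Preorder P] (M : PersistenceModule k P) : Prop :=
  ¬ IsZero M ∧ ∀ M' M'' : PersistenceModule k P,
    Isomorphic M (sum2 M' M'') → IsZero M' ∨ IsZero M''

variable (k)

/-- A subset of a preordered set is convex. -/
def IsConvex {P : Type} [Preorder P] (I : Set P) : Prop :=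
  ∀ p q r : P, p ≤ q → q ≤ r → p ∈ I → r ∈ I → q ∈ I

open Classical in
/-- The fibre of the interval module `k_I` at `x`: a copy of `k` if `x ∈ I`, else `0`. -/
noncomputable def kMod {P : Type} [Preorder P] (I : Set P) (x : P) : Submodule k k :=
  if x ∈ I then ⊤ else ⊥

/-- The canonical generator of the fibre of the interval module at a point of `I`. -/
noncomputable def kGen {P : Type} [Preorder P] {I : Set P} {x : P} (hx : x ∈ I) :
    kMod k I x :=
  ⟨1, by simp [kMod, hx]⟩

open Classical in
/-- The structure maps of the interval module. -/
noncomputable def intervalMap {P : Type} [Preorder P] (I : Set P) {x y : P} (_ : x ≤ y) :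
    kMod k I x →ₗ[k] kMod k I y where
  toFun m := if hy : y ∈ I then ⟨(m : k), by simp [kMod, hy]⟩ else 0
  map_add' a b := by
    by_cases hy : y ∈ I <;> simp [hy]
  map_smul' c a := by
    by_cases hy : y ∈ I <;> simp [hy]

theorem kMod_coe_eq_zero {P : Type} [Preorder P] {I : Set P} {x : P} (hx : x ∉ I)
    (m : kMod k I x) : (m : k) = 0 := by
  have hm := m.2
  simp only [kMod, if_neg hx, Submodule.mem_bot] at hm
  exact hm

/-- The interval module `k_I` of a convex subset `I ⊆ P`: one-dimensional with
identity structure maps on `I`, and zero outside of `I`. -/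
noncomputable def intervalModule {P : Type} [Preorder P] (I : Set P) (hI : IsConvex I) :
    PersistenceModule k P where
  V x := kMod k I x
  map h := intervalMap k I h
  map_refl x := by
    ext m
    by_cases hx : x ∈ I
    · simp [intervalMap, hx]
    · simp [intervalMap, hx, kMod_coe_eq_zero k hx m]
  map_trans {x y z} hxy hyz := by
    ext m
    by_cases hz : z ∈ I
    · by_cases hy : y ∈ I
      · simp [intervalMap, hz, hy]
      · have hx : x ∉ I := fun hx => hy (hI x y z hxy hyz hx hz)
        simp [intervalMap, hz, hy, kMod_coe_eq_zero k hx m]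
    · by_cases hy : y ∈ I <;> simp [intervalMap, hz, hy]

/-- The constant persistence module `k_P` with value `k` everywhere. -/
def constModule (P : Type) [Preorder P] : PersistenceModule k P where
  V _ := k
  map _ := LinearMap.id
  map_refl _ := rfl
  map_trans _ _ := rfl

variable {k}

/-- Connectedness of a subset of a preordered set: any two points are joined by
a finite zigzag of comparable points inside the subset. -/
def IsConn {P : Type} [Preorder P] (I : Set P) : Prop :=
  ∀ p ∈ I, ∀ q ∈ I, ∃ (n : ℕ) (r : ℕ → P), r 0 = p ∧ r n = q ∧ (∀ i ≤ n, r i ∈ I) ∧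
    ∀ i < n, r i ≤ r (i + 1) ∨ r (i + 1) ≤ r i

/-- An interval in a poset: a nonempty convex connected subset. -/
def IsInterval {P : Type} [Preorder P] (I : Set P) : Prop :=
  I.Nonempty ∧ IsConvex I ∧ IsConn I

/-- An ideal: a subset closed under going down. -/
def IsIdeal {P : Type} [Preorder P] (I : Set P) : Prop :=
  ∀ p q : P, p ≤ q → q ∈ I → p ∈ I

/-- A filter: a subset closed under going up. -/
def IsFilter {P : Type} [Preorder P] (I : Set P) : Prop :=
  ∀ p q : P, p ≤ q → p ∈ I → q ∈ I

/-- An interval in a totally ordered set: a nonempty convex subset. -/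
def IsIntervalLin {P : Type} [Preorder P] (I : Set P) : Prop :=
  I.Nonempty ∧ IsConvex I

theorem IsConvex.prod {S T : Type} [Preorder S] [Preorder T] {A : Set S} {B : Set T}
    (hA : IsConvex A) (hB : IsConvex B) : IsConvex (A ×ˢ B) := by
  intro p q r hpq hqr hp hr
  exact ⟨hA _ _ _ hpq.1 hqr.1 hp.1 hr.1, hB _ _ _ hpq.2 hqr.2 hp.2 hr.2⟩

theorem isConvex_univ {P : Type} [Preorder P] : IsConvex (Set.univ : Set P) :=
  fun _ _ _ _ _ _ _ => trivial

/-- A block in the product of two totally ordered sets. -/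
def IsBlock {S T : Type} [LinearOrder S] [LinearOrder T] (I : Set (S × T)) : Prop :=
  I.Nonempty ∧ (
    (∃ JS JT, IsIntervalLin JS ∧ IsIdeal JS ∧ IsIntervalLin JT ∧ IsIdeal JT ∧ I = JS ×ˢ JT) ∨
    (∃ JS JT, IsIntervalLin JS ∧ IsFilter JS ∧ IsIntervalLin JT ∧ IsFilter JT ∧ I = JS ×ˢ JT) ∨
    (∃ JS, IsIntervalLin JS ∧ I = JS ×ˢ (Set.univ : Set T)) ∨
    (∃ JT, IsIntervalLin JT ∧ I = (Set.univ : Set S) ×ˢ JT))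

theorem IsBlock.isConvex {S T : Type} [LinearOrder S] [LinearOrder T] {I : Set (S × T)}
    (h : IsBlock I) : IsConvex I := by
  obtain ⟨-, h | h | h | h⟩ := h
  · obtain ⟨JS, JT, hS, -, hT, -, rfl⟩ := h
    exact hS.2.prod hT.2
  · obtain ⟨JS, JT, hS, -, hT, -, rfl⟩ := h
    exact hS.2.prod hT.2
  · obtain ⟨JS, hS, rfl⟩ := h
    exact hS.2.prod isConvex_univ
  · obtain ⟨JT, hT, rfl⟩ := h
    exact isConvex_univ.prod hT.2

/-- Convexity is inherited by preimages in a subposet. -/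
theorem IsConvex.preimage {P : Type} [Preorder P] {J : Set P} (hJ : IsConvex J)
    (Q : Set P) : IsConvex {p : Q | (p : P) ∈ J} :=
  fun p q r hpq hqr hp hr => hJ p q r hpq hqr hp hr

/-- The restriction of a persistence module to a subposet. -/
def restrict {P : Type} [Preorder P] (M : PersistenceModule k P) (Q : Set P) :
    PersistenceModule k Q where
  V q := M.V q
  map h := M.map h
  map_refl q := M.map_refl q
  map_trans hxy hyz := M.map_trans hxy hyz

/-- Middle exactness for persistence modules over a product of two totally ordered sets:
for every rectangle `a = (x,y) ≤ b = (x,y'), c = (x',y) ≤ d = (x',y')` the sequence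
`M_a → M_b ⊕ M_c → M_d` is exact at `M_b ⊕ M_c`. -/
def MiddleExact {S T : Type} [Preorder S] [Preorder T]
    (M : PersistenceModule k (S × T)) : Prop :=
  ∀ (x x' : S) (y y' : T) (hx : x ≤ x') (hy : y ≤ y')
    (mb : M.V (x, y')) (mc : M.V (x', y)),
    M.map (show (x, y') ≤ (x', y') from ⟨hx, le_refl y'⟩) mb =
      M.map (show (x', y) ≤ (x', y') from ⟨le_refl x', hy⟩) mc →
    ∃ ma : M.V (x, y),
      M.map (show (x, y) ≤ (x, y') from ⟨le_refl x, hy⟩) ma = mb ∧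
      M.map (show (x, y) ≤ (x', y) from ⟨hx, le_refl y⟩) ma = mc


theorem IsIdeal.isConvex {P : Type} [Preorder P] {I : Set P} (h : IsIdeal I) : IsConvex I :=
  fun _ q r _ hqr _ hr => h q r hqr hr

theorem IsFilter.isConvex {P : Type} [Preorder P] {I : Set P} (h : IsFilter I) : IsConvex I :=
  fun p q _ hpq _ hp _ => h p q hpq hp


/-- Convexity of the preimage of a convex subset of `T` in a subposet of `S × T`. -/
theorem IsConvex.preimageSnd {S T : Type} [Preorder S] [Preorder T] {J : Set T}
    (hJ : IsConvex J) (Q : Set (S × T)) : IsConvex {p : ↥Q | (p : S × T).2 ∈ J} :=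
  fun p q r hpq hqr hp hr =>
    hJ _ _ _ (Subtype.coe_le_coe.mpr hpq).2 (Subtype.coe_le_coe.mpr hqr).2 hp hr

end PMod

namespace PMod

/-- Short exactness of all rectangle sequences `0 → M_a → M_b ⊕ M_c → M_d → 0`. -/
def ShortExactAll {k : Type} [Field k] {S T : Type} [Preorder S] [Preorder T]
    (M : PersistenceModule k (S × T)) : Prop :=
  ∀ (x x' : S) (y y' : T) (hx : x ≤ x') (hy : y ≤ y'),
    (∀ ma : M.V (x, y),
      M.map (show (x, y) ≤ (x, y') from ⟨le_refl x, hy⟩) ma = 0 →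
      M.map (show (x, y) ≤ (x', y) from ⟨hx, le_refl y⟩) ma = 0 → ma = 0) ∧
    (∀ (mb : M.V (x, y')) (mc : M.V (x', y)),
      M.map (show (x, y') ≤ (x', y') from ⟨hx, le_refl y'⟩) mb =
        M.map (show (x', y) ≤ (x', y') from ⟨le_refl x', hy⟩) mc →
      ∃ ma : M.V (x, y),
        M.map (show (x, y) ≤ (x, y') from ⟨le_refl x, hy⟩) ma = mb ∧
        M.map (show (x, y) ≤ (x', y) from ⟨hx, le_refl y⟩) ma = mc) ∧
    (∀ md : M.V (x', y'), ∃ (mb : M.V (x, y')) (mc : M.V (x', y)),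
      M.map (show (x, y') ≤ (x', y') from ⟨hx, le_refl y'⟩) mb -
        M.map (show (x', y) ≤ (x', y') from ⟨le_refl x', hy⟩) mc = md)

/-- Membership in the submodule `(Im M^←)_p`. -/
def MemImLeft {k : Type} [Field k] {S T : Type} [Preorder S] [Preorder T]
    (M : PersistenceModule k (S × T)) (p : S × T) (m : M.V p) : Prop :=
  ∀ (q : S) (hq : q ≤ p.1), ∃ m' : M.V (q, p.2),
    M.map (show (q, p.2) ≤ p from ⟨hq, le_refl p.2⟩) m' = m

/-- Membership in the submodule `(Im M^↓)_p`. -/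
def MemImDown {k : Type} [Field k] {S T : Type} [Preorder S] [Preorder T]
    (M : PersistenceModule k (S × T)) (p : S × T) (m : M.V p) : Prop :=
  ∀ (q : T) (hq : q ≤ p.2), ∃ m' : M.V (p.1, q),
    M.map (show (p.1, q) ≤ p from ⟨le_refl p.1, hq⟩) m' = m

/-- Membership in the submodule `(Ker M^→)_p`. -/
def MemKerRight {k : Type} [Field k] {S T : Type} [Preorder S] [Preorder T]
    (M : PersistenceModule k (S × T)) (p : S × T) (m : M.V p) : Prop :=
  ∃ (q : S) (hq : p.1 ≤ q),
    M.map (show p ≤ (q, p.2) from ⟨hq, le_refl p.2⟩) m = 0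

/-- Membership in the submodule `(Ker M^↑)_p`. -/
def MemKerUp {k : Type} [Field k] {S T : Type} [Preorder S] [Preorder T]
    (M : PersistenceModule k (S × T)) (p : S × T) (m : M.V p) : Prop :=
  ∃ (q : T) (hq : p.2 ≤ q),
    M.map (show p ≤ (p.1, q) from ⟨le_refl p.1, hq⟩) m = 0

end PMod

/-!
A descending directed family of subspaces of a finite-dimensional space is stationary, so
`(Im M^←)_d` and `(Im M^↓)_d` are the images of single maps `M_b → M_d` and `M_c → M_d`. Then `b`,
`c`, `d` are three corners of a rectangle, and surjectivity of `M_b ⊕ M_c → M_d` says that the two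
images span `M_d`. Elements of `(Ker M^→)_a` and `(Ker M^↑)_a` die along two edges of a
rectangle issuing from `a`, so an element of both is zero by injectivity of `M_a → M_b ⊕ M_c`.
-/

theorem exists_eq_iInf_of_directed {α ι : Type*} [CompleteLattice α] [WellFoundedLT α]
    [Nonempty ι] {f : ι → α} (hf : Directed (· ≥ ·) f) : ∃ i, f i = ⨅ j, f j := by
  obtain ⟨i, hi⟩ := exists_minimalFor_of_wellFoundedLT (fun _ : ι => True) f
    ⟨Classical.arbitrary ι, trivial⟩
  refine ⟨i, le_antisymm (le_iInf fun j => ?_) (iInf_le f i)⟩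
  obtain ⟨l, hli, hlj⟩ := hf i j
  exact (hi.le_of_le trivial hli).trans hlj

theorem directed_coe_Iic {α : Type*} [Preorder α] [IsCodirectedOrder α] (a : α) :
    Directed (· ≥ ·) ((↑) : Set.Iic a → α) := fun b c =>
  let ⟨d, hdb, hdc⟩ := exists_le_le (b : α) c
  ⟨⟨d, hdb.trans b.2⟩, hdb, hdc⟩

namespace PMod

variable {k : Type} [Field k]

namespace PersistenceModule

variable {P : Type} [Preorder P] (M : PersistenceModule k P)

theorem range_map_le_range_map {x y z : P} (hxy : x ≤ y) (hyz : y ≤ z) :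
    LinearMap.range (M.map (hxy.trans hyz)) ≤ LinearMap.range (M.map hyz) := by
  rw [M.map_trans hxy hyz]
  exact LinearMap.range_comp_le_range _ _

theorem exists_range_map_eq_iInf {ι : Type*} [Nonempty ι] {p : P} [FiniteDimensional k (M.V p)]
    {f : ι → P} (hfp : ∀ i, f i ≤ p) (hf : Directed (· ≥ ·) f) :
    ∃ i, LinearMap.range (M.map (hfp i)) = ⨅ j, LinearMap.range (M.map (hfp j)) := by
  refine exists_eq_iInf_of_directed fun i j => ?_
  obtain ⟨l, hli, hlj⟩ := hf i j
  exact ⟨l, M.range_map_le_range_map hli (hfp i), M.range_map_le_range_map hlj (hfp j)⟩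

end PersistenceModule

section Product

variable {S T : Type} [Preorder S] [Preorder T] (M : PersistenceModule k (S × T))

/-- The submodule `(Im M^←)_p` of `M_p`, bundling the predicate `MemImLeft M p`. -/
def imLeft (p : S × T) : Submodule k (M.V p) :=
  ⨅ q : Set.Iic p.1, LinearMap.range (M.map (show (q.1, p.2) ≤ p from ⟨q.2, le_rfl⟩))

/-- The submodule `(Im M^↓)_p` of `M_p`, bundling the predicate `MemImDown M p`. -/
def imDown (p : S × T) : Submodule k (M.V p) :=
  ⨅ q : Set.Iic p.2, LinearMap.range (M.map (show (p.1, q.1) ≤ p from ⟨le_rfl, q.2⟩))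

theorem exists_range_map_eq_imLeft [IsCodirectedOrder S] (p : S × T)
    [FiniteDimensional k (M.V p)] :
    ∃ (x : S) (hx : x ≤ p.1),
      LinearMap.range (M.map (show (x, p.2) ≤ p from ⟨hx, le_rfl⟩)) = imLeft M p := by
  obtain ⟨⟨x, hx⟩, h⟩ := M.exists_range_map_eq_iInf
    (fun q : Set.Iic p.1 => show (q.1, p.2) ≤ p from ⟨q.2, le_rfl⟩)
    ((directed_coe_Iic p.1).mono_comp (g := (·, p.2)) _ fun _ _ h => ⟨h, le_rfl⟩)
  exact ⟨x, hx, h⟩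

theorem exists_range_map_eq_imDown [IsCodirectedOrder T] (p : S × T)
    [FiniteDimensional k (M.V p)] :
    ∃ (y : T) (hy : y ≤ p.2),
      LinearMap.range (M.map (show (p.1, y) ≤ p from ⟨le_rfl, hy⟩)) = imDown M p := by
  obtain ⟨⟨y, hy⟩, h⟩ := M.exists_range_map_eq_iInf
    (fun q : Set.Iic p.2 => show (p.1, q.1) ≤ p from ⟨le_rfl, q.2⟩)
    ((directed_coe_Iic p.2).mono_comp (g := (p.1, ·)) _ fun _ _ h => ⟨le_rfl, h⟩)
  exact ⟨y, hy, h⟩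

/-- Injectivity of `M_a → M_b ⊕ M_c` for all rectangles; the kernel of this map is the intersection
of the kernels of its two components. -/
def InjectiveAll : Prop :=
  ∀ (x x' : S) (y y' : T) (hx : x ≤ x') (hy : y ≤ y'),
    Disjoint (LinearMap.ker (M.map (show (x, y) ≤ (x', y) from ⟨hx, le_rfl⟩)))
      (LinearMap.ker (M.map (show (x, y) ≤ (x, y') from ⟨le_rfl, hy⟩)))

/-- Surjectivity of `M_b ⊕ M_c → M_d` for all rectangles; the image of this map is the sum of the
images of its two components. -/
def SurjectiveAll : Prop :=
  ∀ (x x' : S) (y y' : T) (hx : x ≤ x') (hy : y ≤ y'),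
    Codisjoint (LinearMap.range (M.map (show (x, y') ≤ (x', y') from ⟨hx, le_rfl⟩)))
      (LinearMap.range (M.map (show (x', y) ≤ (x', y') from ⟨le_rfl, hy⟩)))

variable {M}

theorem mem_imLeft {p : S × T} {m : M.V p} : m ∈ imLeft M p ↔ MemImLeft M p m := by
  simp only [imLeft, Submodule.mem_iInf, Subtype.forall]
  rfl

theorem mem_imDown {p : S × T} {m : M.V p} : m ∈ imDown M p ↔ MemImDown M p m := by
  simp only [imDown, Submodule.mem_iInf, Subtype.forall]
  rfl

theorem ShortExactAll.injectiveAll (h : ShortExactAll M) : InjectiveAll M :=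
  fun x x' y y' hx hy => Submodule.disjoint_def.2 fun m hright hup =>
    (h x x' y y' hx hy).1 m hup hright

theorem ShortExactAll.surjectiveAll (h : ShortExactAll M) : SurjectiveAll M := by
  refine fun x x' y y' hx hy => codisjoint_iff.2 <| Submodule.eq_top_iff'.2 fun m => ?_
  obtain ⟨mb, mc, rfl⟩ := (h x x' y y' hx hy).2.2 m
  exact Submodule.sub_mem_sup ⟨mb, rfl⟩ ⟨mc, rfl⟩

theorem InjectiveAll.eq_zero_of_memKerRight_of_memKerUp (h : InjectiveAll M) {p : S × T}
    {m : M.V p} (hright : MemKerRight M p m) (hup : MemKerUp M p m) : m = 0 := by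
  obtain ⟨x', hx, hmx⟩ := hright
  obtain ⟨y', hy, hmy⟩ := hup
  exact Submodule.disjoint_def.1 (h p.1 x' p.2 y' hx hy) m hmx hmy

theorem SurjectiveAll.codisjoint_imLeft_imDown [IsCodirectedOrder S] [IsCodirectedOrder T]
    (h : SurjectiveAll M) (p : S × T) [FiniteDimensional k (M.V p)] :
    Codisjoint (imLeft M p) (imDown M p) := by
  obtain ⟨x, hx, hleft⟩ := exists_range_map_eq_imLeft M p
  obtain ⟨y, hy, hdown⟩ := exists_range_map_eq_imDown M p
  rw [← hleft, ← hdown]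
  exact h x p.1 y p.2 hx hy

theorem SurjectiveAll.exists_memImLeft_memImDown_eq_add [IsCodirectedOrder S] [IsCodirectedOrder T]
    (h : SurjectiveAll M) {p : S × T} [FiniteDimensional k (M.V p)] (m : M.V p) :
    ∃ a b : M.V p, MemImLeft M p a ∧ MemImDown M p b ∧ m = a + b := by
  have hm : m ∈ imLeft M p ⊔ imDown M p :=
    (h.codisjoint_imLeft_imDown p).eq_top ▸ Submodule.mem_top
  obtain ⟨a, ha, b, hb, rfl⟩ := Submodule.mem_sup.1 hm
  exact ⟨a, b, mem_imLeft.1 ha, mem_imDown.1 hb, rfl⟩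

end Product

end PMod

open PMod in
theorem stmt15_general {k : Type} [Field k] {S T : Type} [Preorder S] [Preorder T]
    [IsCodirectedOrder S] [IsCodirectedOrder T] (M : PersistenceModule k (S × T))
    (hfd : ∀ p, FiniteDimensional k (M.V p)) (hinj : InjectiveAll M) (hsurj : SurjectiveAll M) :
    (∀ (p : S × T) (m : M.V p), MemKerRight M p m → MemKerUp M p m → m = 0) ∧
    (∀ (p : S × T) (m : M.V p), ∃ a b : M.V p,
      MemImLeft M p a ∧ MemImDown M p b ∧ m = a + b) :=
  ⟨fun _ _ => hinj.eq_zero_of_memKerRight_of_memKerUp,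
    fun p => have := hfd p; hsurj.exists_memImLeft_memImDown_eq_add⟩

open PMod in
/-- Lemma 4.5: for a pointwise finite-dimensional module with all rectangle sequences
short exact, `Ker M^→ ∩ Ker M^↑ = 0` and `M = Im M^← + Im M^↓`. -/
theorem stmt15 {k : Type} [Field k] {S T : Type} [LinearOrder S] [LinearOrder T]
    (M : PersistenceModule k (S × T)) (hfd : ∀ p, FiniteDimensional k (M.V p))
    (hse : ShortExactAll M) :
    (∀ (p : S × T) (m : M.V p), MemKerRight M p m → MemKerUp M p m → m = 0) ∧
    (∀ (p : S × T) (m : M.V p), ∃ a b : M.V p,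
      MemImLeft M p a ∧ MemImDown M p b ∧ m = a + b) :=
  stmt15_general M hfd hse.injectiveAll hse.surjectiveAll
end

section
/- Let k be a field, S and T totally ordered sets, and M a pointwise finite-dimensional, indecomposable persistence module over S × T such that for all x ≤ x' in S and y ≤ y' in T, with a = (x,y), b = (x,y'), c = (x',y), d = (x',y'), the sequence 0 → M_a → M_b ⊕ M_c → M_d → 0 is short exact. If (Im M^←) ∩ (Ker M^→) ≠ 0 or (Im M^↓) ∩ (Ker M^↑) ≠ 0, then M ≅ k_I for a block I of type (db), i.e., I = J_S × J_T with J_S ⊆ S and J_T ⊆ T interval ideals. -/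
/-!
A section of `M` is a family `n p ∈ M_p` carried along by all structure maps; its support is an
ideal. If the support `I` is nonempty and directed, `n` spans a copy of `k_I` in `M`, and a
functional on `colim_I M` which is `1` on the class of `n` retracts `M` onto it, so `M ≅ k_I` when
`M` is indecomposable.

A section is found from `m ∈ Im M^← ∩ Ker M^→` at `p = (s, t)`. In the row of `t`, finite dimension
turns the inverse limit into the dual of a direct limit, so `m` extends to a section of that row. It
lies in `Ker M^→`, whose vertical maps are bijective by left exactness, since an element of
`Ker M^→` becomes zero further to the right. Hence the section extends uniquely to all rows, and its
support is `J × T`. The other case is the transpose.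
-/

namespace PMod

variable {k : Type} [Field k]

section Preorder

variable {P Q : Type} [Preorder P] [Preorder Q]

namespace PersistenceModule

theorem map_self (M : PersistenceModule k P) {x : P} (h : x ≤ x) (v : M.V x) : M.map h v = v :=
  LinearMap.congr_fun (M.map_refl x) v

theorem map_map (M : PersistenceModule k P) {x y z : P} (hxy : x ≤ y) (hyz : y ≤ z)
    (v : M.V x) : M.map hyz (M.map hxy v) = M.map (hxy.trans hyz) v :=
  (LinearMap.congr_fun (M.map_trans hxy hyz) v).symm

theorem map_eq_zero_trans (M : PersistenceModule k P) {x y z : P} {hxy : x ≤ y} {v : M.V x}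
    (hv : M.map hxy v = 0) (hyz : y ≤ z) : M.map (hxy.trans hyz) v = 0 := by
  rw [← M.map_map hxy hyz, hv, map_zero]

/-- The pullback of a persistence module along a monotone map. It provides the restriction of a
module over `S × T` to a row, and its transpose over `T × S`. -/
def comap (M : PersistenceModule k Q) (f : P → Q) (hf : Monotone f) : PersistenceModule k P where
  V p := M.V (f p)
  map h := M.map (hf h)
  map_refl p := M.map_refl (f p)
  map_trans hxy hyz := M.map_trans (hf hxy) (hf hyz)

/-- The submodule of `M` given by subspaces `W p ⊆ M_p` which the structure maps preserve. -/
def ofSubmodules (M : PersistenceModule k P) (W : ∀ p, Submodule k (M.V p))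
    (hW : ∀ ⦃p q⦄ (h : p ≤ q), ∀ v ∈ W p, M.map h v ∈ W q) : PersistenceModule k P where
  V p := W p
  map h := (M.map h).restrict (hW h)
  map_refl _ := by ext v; exact M.map_self _ v.1
  map_trans hxy hyz := by ext v; exact (M.map_map hxy hyz v.1).symm

/-- The pointwise dual, a persistence module over the opposite order. It turns the inverse limit
which is needed to extend an element downwards into a direct limit. -/
def dual (M : PersistenceModule k P) : PersistenceModule k Pᵒᵈ where
  V p := Module.Dual k (M.V (OrderDual.ofDual p))
  map h := (M.map (OrderDual.ofDual_le_ofDual.mpr h)).dualMap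
  map_refl p := by rw [M.map_refl, LinearMap.dualMap_id]
  map_trans hxy hyz := by
    rw [LinearMap.dualMap_comp_dualMap, ← M.map_trans]

open Classical in
/-- The colimit of `M`. Linear functionals on it are the morphisms from `M` to the constant
module. -/
abbrev Colimit (M : PersistenceModule k P) : Type :=
  Module.DirectLimit M.V fun _ _ h => M.map h

open Classical in
/-- The canonical map from a stage of `M` to its colimit. -/
noncomputable def toColimit (M : PersistenceModule k P) (p : P) : M.V p →ₗ[k] M.Colimit :=
  Module.DirectLimit.of k P M.V (fun _ _ h => M.map h) p

theorem toColimit_map (M : PersistenceModule k P) {p q : P} (h : p ≤ q) (v : M.V p) :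
    M.toColimit q (M.map h v) = M.toColimit p v :=
  by classical exact Module.DirectLimit.of_f

theorem exists_map_eq_zero_of_toColimit_eq_zero [IsDirectedOrder P] (M : PersistenceModule k P)
    {p : P} {v : M.V p} (hv : M.toColimit p v = 0) : ∃ (q : P) (h : p ≤ q), M.map h v = 0 := by
  classical
  have : Nonempty P := ⟨p⟩
  have : DirectedSystem M.V (fun _ _ h => M.map h) :=
    ⟨fun _ => M.map_self _, fun _ _ _ hxy hyz => M.map_map hxy hyz⟩
  exact Module.DirectLimit.of.zero_exact hv

end PersistenceModule

namespace Hom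

theorem app_map {M N : PersistenceModule k P} (f : Hom M N) {p q : P} (h : p ≤ q) (v : M.V p) :
    f.app q (M.map h v) = N.map h (f.app p v) :=
  (LinearMap.congr_fun (f.natural h) v).symm

/-- The morphism to the constant module given by a functional on the colimit. -/
noncomputable def ofColimitDual {M : PersistenceModule k P} (Ψ : Module.Dual k M.Colimit) :
    Hom M (constModule k P) where
  app p := Ψ ∘ₗ M.toColimit p
  natural h := LinearMap.ext fun v => (congrArg Ψ (M.toColimit_map h v)).symm

/-- The kernel of a morphism of persistence modules. -/
def ker {M N : PersistenceModule k P} (f : Hom M N) : PersistenceModule k P :=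
  M.ofSubmodules (fun p => LinearMap.ker (f.app p)) fun _ _ h v hv => by
    rw [LinearMap.mem_ker] at hv ⊢
    rw [f.app_map, hv, map_zero]

/-- The map from `M` to `N ⊕ ker r` given by `v ↦ (r v, v - i (r v))`, where `i` is right
inverse to `r`. -/
def prodKer {M N : PersistenceModule k P} (i : Hom N M) (r : Hom M N)
    (hri : ∀ p v, r.app p (i.app p v) = v) : Hom M (sum2 N r.ker) where
  app p := (r.app p).prod <|
    LinearMap.codRestrict (LinearMap.ker (r.app p)) (LinearMap.id - i.app p ∘ₗ r.app p) fun v => by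
      simp only [LinearMap.mem_ker, LinearMap.sub_apply, LinearMap.id_apply, LinearMap.comp_apply,
        map_sub, hri, sub_self]
  natural h := by
    refine LinearMap.ext fun v => Prod.ext (r.app_map h v).symm (Subtype.ext ?_)
    change M.map h (v - i.app _ (r.app _ v)) = M.map h v - i.app _ (r.app _ (M.map h v))
    rw [map_sub, r.app_map, i.app_map]

theorem isIsoHom_prodKer {M N : PersistenceModule k P} (i : Hom N M) (r : Hom M N)
    (hri : ∀ p v, r.app p (i.app p v) = v) : IsIsoHom (prodKer i r hri) := by
  refine fun p => ⟨(injective_iff_map_eq_zero _).2 fun v hv => ?_, ?_⟩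
  · have hrv : r.app p v = 0 := congrArg Prod.fst hv
    have hsub : v - i.app p (r.app p v) = 0 := congrArg (fun z => z.2.1) hv
    rwa [hrv, map_zero, sub_zero] at hsub
  · rintro ⟨a, b, hb⟩
    have hr : r.app p (i.app p a + b) = a := by
      rw [map_add, hri, LinearMap.mem_ker.1 hb, add_zero]
    refine ⟨i.app p a + b, Prod.ext hr (Subtype.ext ?_)⟩
    change i.app p a + b - i.app p (r.app p (i.app p a + b)) = b
    rw [hr, add_sub_cancel_left]

end Hom

theorem Indecomposable.isIsoHom_of_rightInverse {M N : PersistenceModule k P}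
    (hM : Indecomposable M) (hN : ¬ IsZero N) (i : Hom N M) (r : Hom M N)
    (hri : ∀ p v, r.app p (i.app p v) = v) : IsIsoHom r := by
  have hker : IsZero r.ker :=
    (hM.2 N r.ker ⟨_, Hom.isIsoHom_prodKer i r hri⟩).resolve_left hN
  refine fun p => ⟨(injective_iff_map_eq_zero _).2 fun v hv => ?_, fun w => ⟨_, hri p w⟩⟩
  exact congrArg Subtype.val (hker p ⟨v, hv⟩)

/-- A section of `M`: a family of elements compatible with the structure maps, that is, an element
of the inverse limit of `M`. -/
def IsSection (M : PersistenceModule k P) (n : ∀ p, M.V p) : Prop :=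
  ∀ ⦃p q⦄ (h : p ≤ q), M.map h (n p) = n q

theorem exists_hom_constModule_app_eq [IsDirectedOrder P] (M : PersistenceModule k P) {p : P}
    (ψ : Module.Dual k (M.V p)) (hψ : ∀ (q : P) (h : p ≤ q), (M.map h).ker ≤ ψ.ker) :
    ∃ φ : Hom M (constModule k P), φ.app p = ψ := by
  have hmem : ψ ∈ (M.toColimit p).dualMap.range := by
    rw [LinearMap.range_dualMap_eq_dualAnnihilator_ker, Submodule.mem_dualAnnihilator]
    intro v hv
    obtain ⟨q, h, hq⟩ := M.exists_map_eq_zero_of_toColimit_eq_zero hv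
    exact hψ q h hq
  obtain ⟨Ψ, rfl⟩ := hmem
  exact ⟨.ofColimitDual Ψ, rfl⟩

theorem exists_isSection_of_forall_mem_range [IsCodirectedOrder P] (M : PersistenceModule k P)
    [∀ p, FiniteDimensional k (M.V p)] {p : P} {m : M.V p}
    (hm : ∀ (q : P) (h : q ≤ p), m ∈ (M.map h).range) : ∃ n, IsSection M n ∧ n p = m := by
  -- Evaluation at `m` is a functional on `M_p^*`; extended to `M.dual`, it is evaluation at a
  -- section of `M`.
  obtain ⟨φ, hφ⟩ := exists_hom_constModule_app_eq M.dual (p := OrderDual.toDual p)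
    (Module.Dual.eval k (M.V p) m) fun q h f hf => by
      obtain ⟨m', rfl⟩ := hm q.ofDual h
      exact LinearMap.congr_fun hf m'
  let n (q : P) : M.V q := (Module.evalEquiv k (M.V q)).symm (φ.app (OrderDual.toDual q))
  have hn (q : P) (f : Module.Dual k (M.V q)) : f (n q) = φ.app (OrderDual.toDual q) f :=
    Module.apply_evalEquiv_symm_apply k (M.V q) f _
  refine ⟨n, fun x y h => (Module.evalEquiv k (M.V y)).injective (LinearMap.ext fun f => ?_),
    (LinearEquiv.symm_apply_eq _).2 hφ⟩
  have hφxy : φ.app (OrderDual.toDual x) (f ∘ₗ M.map h) = φ.app (OrderDual.toDual y) f :=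
    φ.app_map (OrderDual.toDual_le_toDual.2 h) f
  exact (hn x (f ∘ₗ M.map h)).trans (hφxy.trans (hn y f).symm)

theorem IsSection.exists_hom_constModule_app_eq_one [Nonempty P] [IsDirectedOrder P]
    {M : PersistenceModule k P} {n : ∀ p, M.V p} (hn : IsSection M n) (hn0 : ∀ p, n p ≠ 0) :
    ∃ φ : Hom M (constModule k P), ∀ p, φ.app p (n p) = (1 : k) := by
  obtain ⟨p₀⟩ := ‹Nonempty P›
  have hne : M.toColimit p₀ (n p₀) ≠ 0 := fun h0 => by
    obtain ⟨q, h, hq⟩ := M.exists_map_eq_zero_of_toColimit_eq_zero h0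
    exact hn0 q (hn h ▸ hq)
  have hconst (p : P) : M.toColimit p (n p) = M.toColimit p₀ (n p₀) := by
    obtain ⟨q, hp, hp₀⟩ := exists_ge_ge p p₀
    rw [← M.toColimit_map hp, ← M.toColimit_map hp₀, hn, hn]
  obtain ⟨Ψ, hΨ⟩ := Module.Projective.exists_dual_eq_one k hne
  exact ⟨.ofColimitDual Ψ, fun p => (congrArg Ψ (hconst p)).trans hΨ⟩

open Classical in
theorem coe_intervalMap {I : Set P} {p q : P} (h : p ≤ q) (c : kMod k I p) :
    (intervalMap k I h c : k) = if q ∈ I then (c : k) else 0 := by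
  by_cases hq : q ∈ I <;> simp [intervalMap, hq]

theorem not_isZero_intervalModule {I : Set P} (hI : IsConvex I) (hne : I.Nonempty) :
    ¬ IsZero (intervalModule k I hI) := by
  obtain ⟨p, hp⟩ := hne
  exact fun h0 => one_ne_zero (α := k) (congrArg Subtype.val (h0 p (kGen k hp)))

namespace IsSection

variable {M : PersistenceModule k P} {n : ∀ p, M.V p}

theorem restrict (hn : IsSection M n) (I : Set P) :
    IsSection (restrict M I) fun p => n p :=
  fun _ _ h => hn h

theorem isIdeal_support (hn : IsSection M n) : IsIdeal {p | n p ≠ 0} :=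
  fun _ _ h hq hp => hq (by rw [← hn h, hp, map_zero])

/-- The morphism `k_I → M` which sends the generator at `p` to `n p`. -/
noncomputable def homOfIntervalModule (hn : IsSection M n) {I : Set P} (hI : IsConvex I)
    (hnI : ∀ p ∉ I, n p = 0) : Hom (intervalModule k I hI) M where
  app p := LinearMap.toSpanSingleton k (M.V p) (n p) ∘ₗ (kMod k I p).subtype
  natural {p q} h := by
    refine LinearMap.ext fun c : kMod k I p => ?_
    change M.map h ((c : k) • n p) = (intervalMap k I h c : k) • n q
    rw [map_smul, hn, coe_intervalMap]
    split_ifs with hq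
    · rfl
    · rw [hnI q hq, smul_zero, smul_zero]

end IsSection

namespace Hom

variable {M : PersistenceModule k P} {I : Set P}

open Classical in
/-- The functionals of a morphism from `M` restricted to `I` to the constant module, extended by
zero to the points outside of `I`. -/
noncomputable def extendDual (φ : Hom (restrict M I) (constModule k I)) (p : P) :
    Module.Dual k (M.V p) :=
  if hp : p ∈ I then φ.app ⟨p, hp⟩ else 0

theorem extendDual_of_mem (φ : Hom (restrict M I) (constModule k I)) {p : P} (hp : p ∈ I) :
    φ.extendDual p = φ.app ⟨p, hp⟩ :=
  dif_pos hp

theorem extendDual_of_notMem (φ : Hom (restrict M I) (constModule k I)) {p : P} (hp : p ∉ I) :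
    φ.extendDual p = 0 :=
  dif_neg hp

theorem extendDual_mem_kMod (φ : Hom (restrict M I) (constModule k I)) (p : P) (v : M.V p) :
    φ.extendDual p v ∈ kMod k I p := by
  by_cases hp : p ∈ I
  · rw [kMod, if_pos hp]
    exact Submodule.mem_top
  · rw [extendDual_of_notMem φ hp]
    exact Submodule.zero_mem _

/-- The morphism `M → k_I` which extends by zero a morphism defined on the ideal `I`. -/
noncomputable def toIntervalModule (φ : Hom (restrict M I) (constModule k I)) (hI : IsIdeal I) :
    Hom M (intervalModule k I hI.isConvex) where
  app p := (φ.extendDual p).codRestrict (kMod k I p) (φ.extendDual_mem_kMod p)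
  natural {p q} h := by
    classical
    refine LinearMap.ext fun v => Subtype.ext ((coe_intervalMap h _).trans ?_)
    change (if q ∈ I then φ.extendDual p v else 0) = φ.extendDual q (M.map h v)
    split_ifs with hq
    · have hp : p ∈ I := hI p q h hq
      rw [φ.extendDual_of_mem hp, φ.extendDual_of_mem hq]
      exact (φ.app_map (p := ⟨p, hp⟩) (q := ⟨q, hq⟩) h v).symm
    · rw [φ.extendDual_of_notMem hq, LinearMap.zero_apply]

end Hom

theorem Indecomposable.isomorphic_intervalModule_support {M : PersistenceModule k P}
    (hM : Indecomposable M) {n : ∀ p, M.V p} (hn : IsSection M n)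
    (hne : {p | n p ≠ 0}.Nonempty) (hdir : DirectedOn (· ≤ ·) {p | n p ≠ 0}) :
    Isomorphic M (intervalModule k {p | n p ≠ 0} hn.isIdeal_support.isConvex) := by
  have := hne.to_subtype
  have := hdir.isDirectedOrder
  obtain ⟨φ, hφ⟩ := (hn.restrict {p | n p ≠ 0}).exists_hom_constModule_app_eq_one fun p => p.2
  refine ⟨_, hM.isIsoHom_of_rightInverse (not_isZero_intervalModule _ hne)
    (hn.homOfIntervalModule _ fun p => not_not.1) (φ.toIntervalModule hn.isIdeal_support) ?_⟩
  refine fun p (c : kMod k _ p) => Subtype.ext ?_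
  change φ.extendDual p ((c : k) • n p) = (c : k)
  by_cases hp : p ∈ {p | n p ≠ 0}
  · rw [map_smul, φ.extendDual_of_mem hp]
    exact (congrArg ((c : k) • ·) (hφ ⟨p, hp⟩)).trans (mul_one _)
  · rw [φ.extendDual_of_notMem hp, LinearMap.zero_apply, kMod_coe_eq_zero k hp]

end Preorder

section Product

variable {S T : Type} [Preorder S] [Preorder T]

namespace PersistenceModule

/-- The restriction of a module over `S × T` to the row of `t`. -/
abbrev row (M : PersistenceModule k (S × T)) (t : T) : PersistenceModule k S :=
  M.comap (fun x => (x, t)) fun _ _ h => ⟨h, le_rfl⟩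

/-- The transpose of a module over `S × T`. It exchanges the roles of rows and columns. -/
abbrev swap (M : PersistenceModule k (S × T)) : PersistenceModule k (T × S) :=
  M.comap Prod.swap fun _ _ h => ⟨h.2, h.1⟩

/-- The subspace `(Ker M^→)_p` of `M_p`. -/
def kerRight [IsDirectedOrder S] (M : PersistenceModule k (S × T)) (p : S × T) :
    Submodule k (M.V p) where
  carrier := {m | MemKerRight M p m}
  zero_mem' := ⟨p.1, le_rfl, map_zero _⟩
  smul_mem' := by
    rintro c m ⟨q, hq, hm⟩
    exact ⟨q, hq, by rw [map_smul, hm, smul_zero]⟩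
  add_mem' := by
    rintro m m' ⟨q, hq, hm⟩ ⟨q', hq', hm'⟩
    obtain ⟨r, hqr, hqr'⟩ := exists_ge_ge q q'
    refine ⟨r, hq.trans hqr, ?_⟩
    rw [map_add, M.map_eq_zero_trans (z := (r, p.2)) hm ⟨hqr, le_rfl⟩,
      M.map_eq_zero_trans (z := (r, p.2)) hm' ⟨hqr', le_rfl⟩, add_zero]

theorem map_mem_kerRight [IsDirectedOrder S] (M : PersistenceModule k (S × T)) ⦃p q : S × T⦄
    (h : p ≤ q) (m : M.V p) (hm : m ∈ M.kerRight p) : M.map h m ∈ M.kerRight q := by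
  obtain ⟨r, hr, hm⟩ := hm
  obtain ⟨u, hru, hqu⟩ := exists_ge_ge r q.1
  refine ⟨u, hqu, ?_⟩
  rw [M.map_map]
  exact M.map_eq_zero_trans (z := (u, q.2)) hm ⟨hru, h.2⟩

/-- The submodule `Ker M^→` of `M`. -/
def kerRightModule [IsDirectedOrder S] (M : PersistenceModule k (S × T)) :
    PersistenceModule k (S × T) :=
  M.ofSubmodules M.kerRight M.map_mem_kerRight

end PersistenceModule

/-- Left exactness of all rectangle sequences: `0 → M_a → M_b ⊕ M_c → M_d` is exact. -/
structure LeftExact (M : PersistenceModule k (S × T)) : Prop where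
  eq_zero : ∀ (x x' : S) (y y' : T) (hx : x ≤ x') (hy : y ≤ y') (m : M.V (x, y)),
    M.map (show (x, y) ≤ (x, y') from ⟨le_rfl, hy⟩) m = 0 →
    M.map (show (x, y) ≤ (x', y) from ⟨hx, le_rfl⟩) m = 0 → m = 0
  middleExact : MiddleExact M

theorem ShortExactAll.leftExact {M : PersistenceModule k (S × T)} (hM : ShortExactAll M) :
    LeftExact M where
  eq_zero x x' y y' hx hy := (hM x x' y y' hx hy).1
  middleExact x x' y y' hx hy := (hM x x' y y' hx hy).2.1

theorem LeftExact.swap {M : PersistenceModule k (S × T)} (hM : LeftExact M) :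
    LeftExact M.swap where
  eq_zero y y' x x' hy hx m hup hright := hM.eq_zero x x' y y' hx hy m hright hup
  middleExact y y' x x' hy hx mb mc h :=
    (hM.middleExact x x' y y' hx hy mc mb h.symm).imp fun _ => And.symm

theorem LeftExact.bijective_map_kerRightModule [IsDirectedOrder S]
    {M : PersistenceModule k (S × T)} (hM : LeftExact M) (x : S) {y y' : T} (h : y ≤ y') :
    Function.Bijective (M.kerRightModule.map (show (x, y) ≤ (x, y') from ⟨le_rfl, h⟩)) := by
  refine ⟨(injective_iff_map_eq_zero _).2 ?_, ?_⟩
  · rintro ⟨m, q, hq, hright⟩ hup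
    exact Subtype.ext (hM.eq_zero x q y y' hq h m (congrArg Subtype.val hup) hright)
  · rintro ⟨m', q, hq, hright⟩
    obtain ⟨m, hup, hm⟩ := hM.middleExact x q y y' hq h m' 0 (hright.trans (map_zero _).symm)
    exact ⟨⟨m, q, hq, hm⟩, Subtype.ext hup⟩

section VerticalMaps

variable [IsDirectedOrder T] {N : PersistenceModule k (S × T)}

theorem IsSection.eq_zero_iff_of_injective_vertical
    (hN : ∀ (x : S) {y y' : T} (h : y ≤ y'),
      Function.Injective (N.map (show (x, y) ≤ (x, y') from ⟨le_rfl, h⟩)))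
    {n : ∀ p, N.V p} (hn : IsSection N n) (x : S) (y t : T) : n (x, y) = 0 ↔ n (x, t) = 0 := by
  obtain ⟨u, hyu, htu⟩ := exists_ge_ge y t
  rw [← map_eq_zero_iff _ (hN x hyu), ← map_eq_zero_iff _ (hN x htu), hn, hn]

theorem exists_isSection_of_bijective_vertical
    (hN : ∀ (x : S) {y y' : T} (h : y ≤ y'),
      Function.Bijective (N.map (show (x, y) ≤ (x, y') from ⟨le_rfl, h⟩)))
    {t : T} {a : ∀ x, N.V (x, t)} (ha : IsSection (N.row t) a) :
    ∃ n, IsSection N n ∧ ∀ x, n (x, t) = a x := by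
  choose U hyU htU using fun y => exists_ge_ge y t
  choose n hn using fun p : S × T => (hN p.1 (hyU p.2)).2
    (N.map (show (p.1, t) ≤ (p.1, U p.2) from ⟨le_rfl, htU p.2⟩) (a p.1))
  have hmap {x x' : S} {y w : T} (hx : x ≤ x') (hw : U y ≤ w) :
      N.map (show (x, y) ≤ (x', w) from ⟨hx, (hyU y).trans hw⟩) (n (x, y)) =
        N.map (show (x', t) ≤ (x', w) from ⟨le_rfl, (htU y).trans hw⟩) (a x') := by
    rw [← N.map_map (x := (x, y)) (y := (x, U y)) (z := (x', w)) ⟨le_rfl, hyU y⟩ ⟨hx, hw⟩,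
      hn (x, y), N.map_map, ← ha hx]
    exact (N.map_map _ _ _).symm
  refine ⟨n, ?_, fun x => (hN x (htU t)).1 (hn (x, t))⟩
  rintro ⟨x, y⟩ ⟨x', y'⟩ ⟨hx, hy⟩
  obtain ⟨w, hw, hw'⟩ := exists_ge_ge (U y) (U y')
  apply (hN x' ((hyU y').trans hw')).1
  rw [N.map_map, hmap hx hw, hmap le_rfl hw']

end VerticalMaps

theorem LeftExact.exists_isSection_of_memImLeft_memKerRight [IsDirectedOrder S]
    [IsCodirectedOrder S] [IsDirectedOrder T] {M : PersistenceModule k (S × T)} (hM : LeftExact M)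
    {p : S × T} {m : M.V p} (hfd : ∀ x, FiniteDimensional k (M.V (x, p.2)))
    (him : MemImLeft M p m) (hker : MemKerRight M p m) :
    ∃ n, IsSection M n ∧ n p = m ∧ ∀ x y, n (x, y) = 0 ↔ n (x, p.2) = 0 := by
  have : ∀ x, FiniteDimensional k ((M.row p.2).V x) := hfd
  obtain ⟨a, ha, ham⟩ := exists_isSection_of_forall_mem_range (M.row p.2) (m := m) him
  have hker_row (x : S) : a x ∈ M.kerRight (x, p.2) := by
    obtain ⟨q, hq, hm⟩ := hker
    obtain ⟨u, hqu, hxu⟩ := exists_ge_ge q x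
    have hau : a u = 0 := by
      rw [← ha (hq.trans hqu), ham]
      exact M.map_eq_zero_trans (z := (u, p.2)) hm ⟨hqu, le_rfl⟩
    exact ⟨u, hxu, (ha hxu).trans hau⟩
  obtain ⟨n, hn, hna⟩ := exists_isSection_of_bijective_vertical
    (fun x _ _ => hM.bijective_map_kerRightModule x) (t := p.2)
    (a := fun x => ⟨a x, hker_row x⟩) fun _ _ h => Subtype.ext (ha h)
  refine ⟨fun q => (n q).1, fun _ _ h => congrArg Subtype.val (hn h),
    (congrArg Subtype.val (hna p.1)).trans ham, fun x y => ?_⟩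
  have hzero := hn.eq_zero_iff_of_injective_vertical
    (fun x _ _ h => (hM.bijective_map_kerRightModule x h).1) x y p.2
  exact Subtype.ext_iff.symm.trans (hzero.trans Subtype.ext_iff)

theorem LeftExact.exists_isSection_of_memImDown_memKerUp [IsDirectedOrder S] [IsDirectedOrder T]
    [IsCodirectedOrder T] {M : PersistenceModule k (S × T)} (hM : LeftExact M) {p : S × T}
    {m : M.V p} (hfd : ∀ y, FiniteDimensional k (M.V (p.1, y))) (him : MemImDown M p m)
    (hker : MemKerUp M p m) :
    ∃ n, IsSection M n ∧ n p = m ∧ ∀ x y, n (x, y) = 0 ↔ n (p.1, y) = 0 := by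
  obtain ⟨n, hn, hnm, hn0⟩ :=
    hM.swap.exists_isSection_of_memImLeft_memKerRight (p := p.swap) (m := m) hfd him hker
  exact ⟨fun q => n q.swap, fun _ _ h => hn (Prod.swap_le_swap.2 h), hnm, fun x y => hn0 y x⟩

end Product

theorem Indecomposable.isomorphic_intervalModule_prod {S T : Type} [LinearOrder S] [LinearOrder T]
    {M : PersistenceModule k (S × T)} (hM : Indecomposable M) {n : ∀ p, M.V p}
    (hn : IsSection M n) {JS : Set S} {JT : Set T} (hJ : {p | n p ≠ 0} = JS ×ˢ JT)
    (hne : (JS ×ˢ JT).Nonempty) :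
    ∃ h : (IsIntervalLin JS ∧ IsIdeal JS) ∧ (IsIntervalLin JT ∧ IsIdeal JT),
      Isomorphic M (intervalModule k (JS ×ˢ JT) (h.1.1.2.prod h.2.1.2)) := by
  have hideal : IsIdeal (JS ×ˢ JT) := hJ ▸ hn.isIdeal_support
  have ⟨⟨s, t⟩, hs, ht⟩ := hne
  have hJS : IsIdeal JS := fun x x' h hx => (hideal (x, t) (x', t) ⟨h, le_rfl⟩ ⟨hx, ht⟩).1
  have hJT : IsIdeal JT := fun y y' h hy => (hideal (s, y) (s, y') ⟨le_rfl, h⟩ ⟨hs, hy⟩).2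
  refine ⟨⟨⟨⟨⟨s, hs⟩, hJS.isConvex⟩, hJS⟩, ⟨⟨t, ht⟩, hJT.isConvex⟩, hJT⟩, ?_⟩
  have hdir : DirectedOn (· ≤ ·) (JS ×ˢ JT) :=
    (DirectedOn.of_linearOrder JS).prod (DirectedOn.of_linearOrder JT)
  have hiso := hM.isomorphic_intervalModule_support hn (hJ ▸ hne) (hJ ▸ hdir)
  simpa only [hJ] using hiso

end PMod

open PMod in
theorem stmt16_general {k : Type} [Field k] {S T : Type} [LinearOrder S] [LinearOrder T]
    (M : PersistenceModule k (S × T)) (hle : LeftExact M) (hind : Indecomposable M)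
    (hnz : (∃ (p : S × T) (m : M.V p), (∀ x, FiniteDimensional k (M.V (x, p.2))) ∧
              m ≠ 0 ∧ MemImLeft M p m ∧ MemKerRight M p m) ∨
           (∃ (p : S × T) (m : M.V p), (∀ y, FiniteDimensional k (M.V (p.1, y))) ∧
              m ≠ 0 ∧ MemImDown M p m ∧ MemKerUp M p m)) :
    ∃ (JS : Set S) (JT : Set T)
      (h : (IsIntervalLin JS ∧ IsIdeal JS) ∧ (IsIntervalLin JT ∧ IsIdeal JT)),
      (JS = Set.univ ∨ JT = Set.univ) ∧
        Isomorphic M (intervalModule k (JS ×ˢ JT) (h.1.1.2.prod h.2.1.2)) := by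
  rcases hnz with ⟨p, m, hfd, hm, him, hker⟩ | ⟨p, m, hfd, hm, him, hker⟩
  · obtain ⟨n, hn, rfl, hn0⟩ := hle.exists_isSection_of_memImLeft_memKerRight hfd him hker
    have hJ : {q | n q ≠ 0} = {x | n (x, p.2) ≠ 0} ×ˢ Set.univ :=
      Set.ext fun q => (hn0 q.1 q.2).not.trans (Iff.of_eq (and_true _)).symm
    obtain ⟨h, hiso⟩ := hind.isomorphic_intervalModule_prod hn hJ ⟨p, hm, trivial⟩
    exact ⟨_, _, h, .inr rfl, hiso⟩
  · obtain ⟨n, hn, rfl, hn0⟩ := hle.exists_isSection_of_memImDown_memKerUp hfd him hker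
    have hJ : {q | n q ≠ 0} = Set.univ ×ˢ {y | n (p.1, y) ≠ 0} :=
      Set.ext fun q => (hn0 q.1 q.2).not.trans (Iff.of_eq (true_and _)).symm
    obtain ⟨h, hiso⟩ := hind.isomorphic_intervalModule_prod hn hJ ⟨p, trivial, hm⟩
    exact ⟨_, _, h, .inl rfl, hiso⟩

open PMod in
/-- Lemma 4.6: an indecomposable pointwise finite-dimensional module with all rectangle
sequences short exact and `Im M^← ∩ Ker M^→ ≠ 0` or `Im M^↓ ∩ Ker M^↑ ≠ 0` is a block
module of type (db). -/
theorem stmt16 {k : Type} [Field k] {S T : Type} [LinearOrder S] [LinearOrder T]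
    (M : PersistenceModule k (S × T)) (hfd : ∀ p, FiniteDimensional k (M.V p))
    (hse : ShortExactAll M) (hind : Indecomposable M)
    (hnz : (∃ (p : S × T) (m : M.V p), m ≠ 0 ∧ MemImLeft M p m ∧ MemKerRight M p m) ∨
           (∃ (p : S × T) (m : M.V p), m ≠ 0 ∧ MemImDown M p m ∧ MemKerUp M p m)) :
    ∃ (JS : Set S) (JT : Set T)
      (h : (IsIntervalLin JS ∧ IsIdeal JS) ∧ (IsIntervalLin JT ∧ IsIdeal JT)),
      Isomorphic M (intervalModule k (JS ×ˢ JT) (h.1.1.2.prod h.2.1.2)) := by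
  obtain ⟨JS, JT, h, -, hiso⟩ := stmt16_general M hse.leftExact hind <|
    hnz.imp (fun ⟨p, m, hm⟩ => ⟨p, m, fun _ => hfd _, hm⟩)
      fun ⟨p, m, hm⟩ => ⟨p, m, fun _ => hfd _, hm⟩
  exact ⟨JS, JT, h, hiso⟩
end

section
/- Let k be a field, let γ : ℤ → ℤ² be a zigzag path, and let Z(γ) ⊆ ℝ² be the associated zigzag subposet with the partial order inherited from ℝ². Then every pointwise finite-dimensional persistence module M : Z(γ) → Vec_k is isomorphic to a direct sum of interval modules k_I for intervals I ⊆ Z(γ). -/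
namespace PMod

/-- A zigzag path in `ℤ²`: each step moves right or down, and the path diverges to
`(∞, -∞)` (resp. `(-∞, ∞)`) as `i → ∞` (resp. `i → -∞`). -/
def IsZigzagPath (γ : ℤ → ℤ × ℤ) : Prop :=
  (∀ i : ℤ, γ (i + 1) = γ i + (1, 0) ∨ γ (i + 1) = γ i - (0, 1)) ∧
  (∀ n : ℤ, ∃ N : ℤ, ∀ i ≥ N, n ≤ (γ i).1 ∧ (γ i).2 ≤ -n) ∧
  (∀ n : ℤ, ∃ N : ℤ, ∀ i ≤ N, (γ i).1 ≤ -n ∧ n ≤ (γ i).2)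

/-- The zigzag subposet `Z(γ) ⊆ ℝ²` associated to a zigzag path `γ`. -/
def Zset (γ : ℤ → ℤ × ℤ) : Set (ℝ × ℝ) :=
  {p | ∃ i : ℤ,
    ((((γ i).1 : ℝ), ((γ i).2 : ℝ)) ≤ p ∧ p ≤ (((γ (i + 1)).1 : ℝ), ((γ (i + 1)).2 : ℝ))) ∨
    ((((γ (i + 1)).1 : ℝ), ((γ (i + 1)).2 : ℝ)) ≤ p ∧ p ≤ (((γ i).1 : ℝ), ((γ i).2 : ℝ)))}

end PMod

/-!
A morphism from an interval module `k_I` to `M`, or from `M` to `k_I`, is a section over `I` of `M`,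
or of its pointwise dual. If `M ≠ 0`, there are an interval `I`, a section of each kind and a point
at which they pair to `1`; they then pair to `1` on all of `I`, and `k_I` splits off `M`. By Zorn's
lemma there is a maximal biorthogonal family of such summands. By finite dimensionality it is
locally finite, so that the joint kernel of its functionals is a complement of its sum, and by
maximality this complement vanishes.

To find `I` around a point `x`, follow the zigzag in one direction. The vectors at `x` that extend
up to `y`, and those that extend up to `y` and vanish there, form two monotone families of
subspaces of `M_x`, and `I` ends where one of the two changes its position relative to a given
subspace. On each segment the functionals that extend are the annihilators of the corresponding
spaces of vectors, because this holds for a single comparability and composes. Coherent extensions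
to the whole ray are obtained from extensions to all its segments by a linear limit, as finite
dimensional spaces are linearly compact.
-/

namespace PMod

section Decomposition

variable {k : Type} [Field k] {P : Type} [Preorder P] {M : PersistenceModule k P}

theorem PersistenceModule.map_self_s17 (M : PersistenceModule k P) (x : P) (m : M.V x) :
    M.map le_rfl m = m :=
  LinearMap.congr_fun (M.map_refl x) m

theorem PersistenceModule.map_map_s17 (M : PersistenceModule k P) {x y z : P} (hxy : x ≤ y)
    (hyz : y ≤ z) (m : M.V x) : M.map hyz (M.map hxy m) = M.map (hxy.trans hyz) m :=
  (LinearMap.congr_fun (M.map_trans hxy hyz) m).symm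

/-- A direct summand of `M` isomorphic to an interval module, encoded by its support, its
inclusion (a generator of the image of each fibre) and its retraction (a functional on each
fibre). -/
structure IntervalSummand (M : PersistenceModule k P) where
  support : Set P
  isInterval : IsInterval support
  gen : ∀ y, M.V y
  coord : ∀ y, Module.Dual k (M.V y)
  gen_of_notMem : ∀ {y}, y ∉ support → gen y = 0
  map_gen : ∀ {a b} (h : a ≤ b), a ∈ support → M.map h (gen a) = gen b
  coord_of_notMem : ∀ {y}, y ∉ support → coord y = 0
  coord_map : ∀ {a b} (h : a ≤ b), b ∈ support → ∀ m, coord b (M.map h m) = coord a m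
  coord_gen : ∀ {y}, y ∈ support → coord y (gen y) = 1

/-- The functionals of one summand vanish on the generators of the other (a one-sided
condition). -/
def IntervalSummand.Orthogonal (s t : IntervalSummand M) : Prop :=
  ∀ y, s.coord y (t.gen y) = 0

namespace IntervalSummand

theorem map_coord_smul_gen (s : IntervalSummand M) {a b : P} (h : a ≤ b) (m : M.V a) :
    M.map h (s.coord a m • s.gen a) = s.coord b (M.map h m) • s.gen b := by
  rw [map_smul]
  by_cases ha : a ∈ s.support <;> by_cases hb : b ∈ s.support
  · rw [s.map_gen h ha, s.coord_map h hb]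
  · rw [s.map_gen h ha, s.gen_of_notMem hb, smul_zero, smul_zero]
  · rw [s.coord_map h hb, s.coord_of_notMem ha, LinearMap.zero_apply, zero_smul, zero_smul]
  · rw [s.gen_of_notMem ha, s.gen_of_notMem hb, map_zero, smul_zero, smul_zero]

theorem coord_map_eq_zero (s : IntervalSummand M) {a b : P} (h : a ≤ b) {m : M.V a}
    (hm : s.coord a m = 0) : s.coord b (M.map h m) = 0 := by
  by_cases hb : b ∈ s.support
  · rw [s.coord_map h hb, hm]
  · rw [s.coord_of_notMem hb, LinearMap.zero_apply]

theorem coord_mul_coord_gen (s : IntervalSummand M) {y : P} (m : M.V y) :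
    s.coord y m * s.coord y (s.gen y) = s.coord y m := by
  by_cases hy : y ∈ s.support
  · rw [s.coord_gen hy, mul_one]
  · rw [s.coord_of_notMem hy, LinearMap.zero_apply, zero_mul]

variable {ι : Type} {s : ι → IntervalSummand M}

/-- A family of summands whose functionals and generators are biorthogonal. -/
def IsOrthogonal (s : ι → IntervalSummand M) : Prop :=
  Pairwise fun i j => (s i).Orthogonal (s j)

theorem finite_mem_support (hs : IsOrthogonal s) (y : P)
    [FiniteDimensional k (M.V y)] : {i | y ∈ (s i).support}.Finite := by
  have hli : LinearIndependent k fun i : {i | y ∈ (s i).support} => (s i).gen y :=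
    .of_pairwise_dual_eq_zero_one _ (fun i => (s i).coord y)
      (fun i j hij => hs (Subtype.coe_ne_coe.mpr hij) y) fun i => (s i).coord_gen i.2
  exact hli.finite

/-- The projection of the fibre `M.V y` onto the span of the generators of the summands `s i`. -/
noncomputable def proj (s : ι → IntervalSummand M) (y : P) : M.V y →ₗ[k] M.V y :=
  ∑ᶠ i, ((s i).coord y).smulRight ((s i).gen y)

theorem hasFiniteSupport_smulRight (hs : IsOrthogonal s) (y : P)
    [FiniteDimensional k (M.V y)] :
    Function.HasFiniteSupport fun i => ((s i).coord y).smulRight ((s i).gen y) := by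
  refine (finite_mem_support hs y).subset fun i hi => not_imp_comm.mp (fun hy => ?_) hi
  simp only [(s i).coord_of_notMem hy, LinearMap.zero_smulRight]

theorem hasFiniteSupport_coord_smul_gen (hs : IsOrthogonal s) {y : P}
    [FiniteDimensional k (M.V y)] (m : M.V y) :
    Function.HasFiniteSupport fun i => (s i).coord y m • (s i).gen y :=
  (hasFiniteSupport_smulRight hs y).fun_comp (g := fun f : M.V y →ₗ[k] M.V y => f m) rfl

theorem proj_apply (hs : IsOrthogonal s) {y : P}
    [FiniteDimensional k (M.V y)] (m : M.V y) :
    proj s y m = ∑ᶠ i, (s i).coord y m • (s i).gen y :=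
  map_finsum (LinearMap.applyₗ m) (hasFiniteSupport_smulRight hs y)

theorem map_proj [∀ y, FiniteDimensional k (M.V y)]
    (hs : IsOrthogonal s) {a b : P} (h : a ≤ b) (m : M.V a) :
    M.map h (proj s a m) = proj s b (M.map h m) := by
  rw [proj_apply hs, proj_apply hs, map_finsum _ (hasFiniteSupport_coord_smul_gen hs m)]
  exact finsum_congr fun i => (s i).map_coord_smul_gen h m

theorem coord_proj (hs : IsOrthogonal s) {y : P}
    [FiniteDimensional k (M.V y)] (i : ι) (m : M.V y) :
    (s i).coord y (proj s y m) = (s i).coord y m := by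
  rw [proj_apply hs, map_finsum _ (hasFiniteSupport_coord_smul_gen hs m), finsum_eq_single _ i]
  · rw [map_smul, smul_eq_mul, coord_mul_coord_gen]
  · intro j hj
    rw [map_smul, hs hj.symm y, smul_zero]

theorem proj_gen (hs : IsOrthogonal s) {y : P}
    [FiniteDimensional k (M.V y)] (i : ι) : proj s y ((s i).gen y) = (s i).gen y := by
  rw [proj_apply hs, finsum_eq_single _ i]
  · by_cases hy : y ∈ (s i).support
    · rw [coord_gen _ hy, one_smul]
    · rw [gen_of_notMem _ hy, smul_zero]
  · intro j hj
    rw [hs hj y, zero_smul]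

variable (s) in
/-- The complement of the summands `s i` in `M`: the common kernel of their functionals. -/
def complement : PersistenceModule k P where
  V y := ↥(⨅ i, LinearMap.ker ((s i).coord y))
  map h := (M.map h).restrict fun m hm => by
    simp only [Submodule.mem_iInf, LinearMap.mem_ker] at hm ⊢
    exact fun i => (s i).coord_map_eq_zero h (hm i)
  map_refl y := LinearMap.ext fun m => Subtype.ext (M.map_self_s17 y m)
  map_trans hxy hyz := LinearMap.ext fun m => Subtype.ext (M.map_map_s17 hxy hyz m).symm

/-- The projection of `M` onto the complement of the summands `s i`. -/
noncomputable def toComplement [∀ y, FiniteDimensional k (M.V y)]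
    (hs : IsOrthogonal s) (y : P) :
    M.V y →ₗ[k] (complement s).V y :=
  (LinearMap.id - proj s y).codRestrict _ fun m => by
    simp only [Submodule.mem_iInf, LinearMap.mem_ker, LinearMap.sub_apply, LinearMap.id_apply,
      map_sub, coord_proj hs, sub_self, implies_true]

theorem map_toComplement [∀ y, FiniteDimensional k (M.V y)]
    (hs : IsOrthogonal s) {a b : P} (h : a ≤ b) (m : M.V a) :
    (complement s).map h (toComplement hs a m) = toComplement hs b (M.map h m) :=
  Subtype.ext <| (map_sub (M.map h) m _).trans (congrArg _ (map_proj hs h m))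

theorem toComplement_coe [∀ y, FiniteDimensional k (M.V y)]
    (hs : IsOrthogonal s) {y : P} (m : (complement s).V y) :
    toComplement hs y m.1 = m := by
  have hm : ∀ i, (s i).coord y m.1 = 0 := fun i => (Submodule.mem_iInf _).mp m.2 i
  refine Subtype.ext ((congrArg (m.1 - ·) ?_).trans (sub_zero _))
  simp only [proj_apply hs, hm, zero_smul, finsum_zero]

theorem toComplement_gen [∀ y, FiniteDimensional k (M.V y)]
    (hs : IsOrthogonal s) (i : ι) (y : P) :
    toComplement hs y ((s i).gen y) = 0 :=
  Subtype.ext <| sub_eq_zero.mpr (proj_gen hs i).symm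

/-- An interval summand of the complement, seen as an interval summand of `M`. -/
noncomputable def ofComplement [∀ y, FiniteDimensional k (M.V y)]
    (hs : IsOrthogonal s) (t : IntervalSummand (complement s)) :
    IntervalSummand M where
  support := t.support
  isInterval := t.isInterval
  gen y := (t.gen y).1
  coord y := t.coord y ∘ₗ toComplement hs y
  gen_of_notMem hy := congrArg Subtype.val (t.gen_of_notMem hy)
  map_gen h ha := congrArg Subtype.val (t.map_gen h ha)
  coord_of_notMem hy := by rw [t.coord_of_notMem hy, LinearMap.zero_comp]
  coord_map h hb m := by
    simp only [LinearMap.comp_apply, ← map_toComplement hs h, t.coord_map h hb]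
  coord_gen hy := by rw [LinearMap.comp_apply, toComplement_coe, t.coord_gen hy]

theorem orthogonal_ofComplement [∀ y, FiniteDimensional k (M.V y)]
    (hs : IsOrthogonal s) (t : IntervalSummand (complement s))
    (i : ι) : (s i).Orthogonal (ofComplement hs t) :=
  fun y => (Submodule.mem_iInf _).mp (t.gen y).2 i

theorem ofComplement_orthogonal [∀ y, FiniteDimensional k (M.V y)]
    (hs : IsOrthogonal s) (t : IntervalSummand (complement s))
    (i : ι) : (ofComplement hs t).Orthogonal (s i) :=
  fun y => (congrArg (t.coord y) (toComplement_gen hs i y)).trans (map_zero _)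

/-- The inclusion of the interval module of the support of `s` into `M`. -/
noncomputable def inclusion (s : IntervalSummand M) (y : P) : kMod k s.support y →ₗ[k] M.V y :=
  (kMod k s.support y).subtype.smulRight (s.gen y)

theorem map_inclusion (s : IntervalSummand M) {a b : P} (h : a ≤ b) (c : kMod k s.support a) :
    M.map h (s.inclusion a c) = s.inclusion b (intervalMap k s.support h c) := by
  simp only [inclusion, LinearMap.smulRight_apply, Submodule.subtype_apply, map_smul]
  by_cases ha : a ∈ s.support
  · rw [s.map_gen h ha]
    by_cases hb : b ∈ s.support
    · simp only [intervalMap, dif_pos hb, LinearMap.coe_mk, AddHom.coe_mk]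
    · rw [s.gen_of_notMem hb, smul_zero, smul_zero]
  · obtain rfl : c = 0 := Subtype.ext (kMod_coe_eq_zero k ha c)
    rw [map_zero, ZeroMemClass.coe_zero, ZeroMemClass.coe_zero, zero_smul, zero_smul]

theorem coord_inclusion (s : IntervalSummand M) {y : P} (c : kMod k s.support y) :
    s.coord y (s.inclusion y c) = c := by
  by_cases hy : y ∈ s.support
  · simp only [inclusion, LinearMap.smulRight_apply, Submodule.subtype_apply, map_smul,
      s.coord_gen hy, smul_eq_mul, mul_one]
  · rw [s.coord_of_notMem hy, kMod_coe_eq_zero k hy, LinearMap.zero_apply]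

theorem coord_inclusion_of_ne (hs : IsOrthogonal s) {i j : ι} (hij : i ≠ j) {y : P}
    (c : kMod k (s j).support y) : (s i).coord y ((s j).inclusion y c) = 0 := by
  simp only [inclusion, LinearMap.smulRight_apply, map_smul, hs hij y, smul_zero]

variable (s) in
open Classical in
/-- The inclusion into `M` of the direct sum of the interval modules of the summands `s i`. -/
noncomputable def sumInclusion (y : P) : (Π₀ i, kMod k (s i).support y) →ₗ[k] M.V y :=
  DFinsupp.lsum k fun i => (s i).inclusion y

theorem map_comp_sumInclusion {a b : P} (h : a ≤ b) :
    M.map h ∘ₗ sumInclusion s a =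
      sumInclusion s b ∘ₗ DFinsupp.mapRange.linearMap fun i => intervalMap k (s i).support h := by
  classical
  refine DFinsupp.lhom_ext fun i c => ?_
  simp only [sumInclusion, LinearMap.comp_apply, DFinsupp.mapRange.linearMap_apply,
    DFinsupp.mapRange_single, DFinsupp.lsum_single, map_inclusion]

theorem coord_sumInclusion (hs : IsOrthogonal s) (i : ι) {y : P}
    (f : Π₀ i, kMod k (s i).support y) : (s i).coord y (sumInclusion s y f) = f i := by
  classical
  have h : (s i).coord y ∘ₗ sumInclusion s y = Submodule.subtype _ ∘ₗ DFinsupp.lapply i := by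
    refine DFinsupp.lhom_ext fun j c => ?_
    simp only [sumInclusion, LinearMap.comp_apply, DFinsupp.lsum_single, DFinsupp.lapply_apply]
    rcases eq_or_ne i j with rfl | hij
    · rw [DFinsupp.single_eq_same, coord_inclusion, Submodule.subtype_apply]
    · rw [DFinsupp.single_eq_of_ne hij, map_zero, coord_inclusion_of_ne hs hij]
  exact LinearMap.congr_fun h f

theorem sumInclusion_injective (hs : IsOrthogonal s) (y : P) :
    Function.Injective (sumInclusion s y) := fun f g hfg =>
  DFinsupp.ext fun i => Subtype.ext <| by
    rw [← coord_sumInclusion hs, ← coord_sumInclusion hs, hfg]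

theorem coord_smul_gen_mem_range (i : ι) (y : P) (m : M.V y) :
    (s i).coord y m • (s i).gen y ∈ LinearMap.range (sumInclusion s y) := by
  classical
  by_cases hy : y ∈ (s i).support
  · exact ⟨DFinsupp.single i ((s i).coord y m • kGen k hy), by
      simp [sumInclusion, inclusion, kGen]⟩
  · rw [gen_of_notMem _ hy, smul_zero]
    exact zero_mem _

theorem sumInclusion_surjective (hs : IsOrthogonal s) {y : P} [FiniteDimensional k (M.V y)]
    (hproj : ∀ m, proj s y m = m) : Function.Surjective (sumInclusion s y) := fun m => by
  have hm : m ∈ LinearMap.range (sumInclusion s y) := by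
    rw [← hproj m, proj_apply hs]
    exact finsum_induction (· ∈ LinearMap.range (sumInclusion s y)) (zero_mem _)
      (fun _ _ => add_mem) fun i => coord_smul_gen_mem_range i y m
  exact hm

theorem isomorphic_directSum [∀ y, FiniteDimensional k (M.V y)] (hs : IsOrthogonal s)
    (hzero : IsZero (complement s)) :
    Isomorphic (directSum fun i => intervalModule k (s i).support (s i).isInterval.2.1) M :=
  ⟨⟨sumInclusion s, map_comp_sumInclusion⟩, fun y => ⟨sumInclusion_injective hs y,
    sumInclusion_surjective hs fun m =>
      (sub_eq_zero.mp (congrArg Subtype.val (hzero y (toComplement hs y m)))).symm⟩⟩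

theorem exists_maximal_orthogonal (M : PersistenceModule k P) :
    ∃ S : Set (IntervalSummand M), Maximal (fun S => S.Pairwise Orthogonal) S :=
  zorn_subset {S | S.Pairwise Orthogonal} fun c hc hchain =>
    ⟨⋃₀ c, (Set.pairwise_sUnion hchain.directedOn).mpr hc, fun _ => Set.subset_sUnion_of_mem⟩

theorem not_orthogonal_self (s : IntervalSummand M) : ¬ s.Orthogonal s := by
  obtain ⟨y, hy⟩ := s.isInterval.1
  exact fun h => one_ne_zero ((s.coord_gen hy).symm.trans (h y))

theorem isEmpty_complement_of_maximal [∀ y, FiniteDimensional k (M.V y)]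
    {S : Set (IntervalSummand M)} (hS : Maximal (fun S => S.Pairwise Orthogonal) S) :
    IsEmpty (IntervalSummand (complement ((↑) : S → IntervalSummand M))) := by
  have hs : IsOrthogonal ((↑) : S → IntervalSummand M) := hS.prop.subtype
  refine ⟨fun t => ?_⟩
  have htS : ofComplement hs t ∉ S := fun h =>
    not_orthogonal_self _ (orthogonal_ofComplement hs t ⟨_, h⟩)
  have hins : (insert (ofComplement hs t) S).Pairwise Orthogonal :=
    (Set.pairwise_insert_of_notMem htS).mpr ⟨hS.prop, fun s hs' =>
      ⟨ofComplement_orthogonal hs t ⟨s, hs'⟩, orthogonal_ofComplement hs t ⟨s, hs'⟩⟩⟩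
  exact htS (hS.mem_of_prop_insert hins)

end IntervalSummand

theorem Isomorphic.symm {N : PersistenceModule k P} (h : Isomorphic M N) : Isomorphic N M := by
  obtain ⟨f, hf⟩ := h
  let e x := LinearEquiv.ofBijective (f.app x) (hf x)
  refine ⟨⟨fun x => (e x).symm, fun {x y} hxy => LinearMap.ext fun n => ?_⟩,
    fun x => (e x).symm.bijective⟩
  refine (e y).eq_symm_apply.mpr ?_
  calc f.app y (M.map hxy ((e x).symm n))
      = N.map hxy (e x ((e x).symm n)) := (LinearMap.congr_fun (f.natural hxy) _).symm
    _ = N.map hxy n := by rw [LinearEquiv.apply_symm_apply]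

theorem exists_isomorphic_directSum_intervalModule
    (h : ∀ N : PersistenceModule k P, (∀ y, FiniteDimensional k (N.V y)) → ¬ IsZero N →
      Nonempty (IntervalSummand N))
    (M : PersistenceModule k P) [∀ y, FiniteDimensional k (M.V y)] :
    ∃ (ι : Type) (I : ι → Set P) (hI : ∀ i, IsInterval (I i)),
      Isomorphic M (directSum fun i => intervalModule k (I i) (hI i).2.1) := by
  obtain ⟨S, hS⟩ := IntervalSummand.exists_maximal_orthogonal M
  have hzero : IsZero (IntervalSummand.complement ((↑) : S → IntervalSummand M)) :=
    of_not_not fun hne => not_isEmpty_iff.mpr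
      (h _ (fun _ => FiniteDimensional.finiteDimensional_submodule _) hne)
      (IntervalSummand.isEmpty_complement_of_maximal hS)
  exact ⟨S, fun s => s.1.support, fun s => s.1.isInterval,
    (IntervalSummand.isomorphic_directSum hS.prop.subtype hzero).symm⟩

end Decomposition

section LinearLimit

variable {k ι : Type*} [Field k] {l : Filter ι}

variable (k l) in
theorem exists_dual_eq_zero_of_eventually [l.NeBot] : ∃ L : Module.Dual k (ι → k),
    (∀ f : ι → k, (∀ᶠ i in l, f i = 0) → L f = 0) ∧ L 1 = 1 := by
  let N : Submodule k (ι → k) :=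
    { carrier := {f | ∀ᶠ i in l, f i = 0}
      zero_mem' := .of_forall fun _ => rfl
      add_mem' := fun hf hg => by
        filter_upwards [hf, hg] with i hi hj using (congrArg₂ _ hi hj).trans (add_zero 0)
      smul_mem' := fun c f hf => by
        filter_upwards [hf] with i hi using (congrArg _ hi).trans (mul_zero c) }
  have h1 : (1 : ι → k) ∉ N := fun h => by
    obtain ⟨_, hi⟩ := h.exists
    exact one_ne_zero hi
  obtain ⟨L, hL1, hL⟩ := Submodule.exists_le_ker_of_notMem h1
  exact ⟨(L 1)⁻¹ • L, fun f hf => by rw [LinearMap.smul_apply, hL hf, smul_zero],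
    inv_mul_cancel₀ hL1⟩

variable (k l) in
/-- A linear functional that plays the role of the limit along `l` for arbitrary `k`-valued
functions: it only depends on germs along `l` and takes the right value on constants. -/
noncomputable def limitFunctional [l.NeBot] : Module.Dual k (ι → k) :=
  (exists_dual_eq_zero_of_eventually k l).choose

theorem limitFunctional_eq_of_eventually [l.NeBot] {f : ι → k} {c : k}
    (h : ∀ᶠ i in l, f i = c) : limitFunctional k l f = c := by
  obtain ⟨hzero, hone⟩ := (exists_dual_eq_zero_of_eventually k l).choose_spec
  have h0 : limitFunctional k l (f - c • 1) = 0 := hzero _ <| by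
    filter_upwards [h] with i hi
    rw [Pi.sub_apply, Pi.smul_apply, Pi.one_apply, hi, smul_eq_mul, mul_one, sub_self]
  have h1 : limitFunctional k l 1 = 1 := hone
  rwa [map_sub, map_smul, h1, smul_eq_mul, mul_one, sub_eq_zero] at h0

theorem limitFunctional_congr [l.NeBot] {f g : ι → k} (h : f =ᶠ[l] g) :
    limitFunctional k l f = limitFunctional k l g := by
  rw [← sub_eq_zero, ← map_sub]
  exact limitFunctional_eq_of_eventually (h.mono fun _ => sub_eq_zero_of_eq)

theorem eq_of_forall_dual {V : Type*} [AddCommGroup V] [Module k V] {v w : V}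
    (h : ∀ θ : Module.Dual k V, θ v = θ w) : v = w :=
  Module.eval_apply_injective k (LinearMap.ext h)

variable {V W : Type*} [AddCommGroup V] [Module k V] [FiniteDimensional k V]
  [AddCommGroup W] [Module k W] [FiniteDimensional k W]

variable (k l) in
/-- The vector that `limitFunctional` assigns to a family of vectors, found through the bidual. -/
noncomputable def limitVector [l.NeBot] (v : ι → V) : V :=
  (Module.evalEquiv k V).symm
    (limitFunctional k l ∘ₗ LinearMap.pi fun i => Module.Dual.eval k V (v i))

theorem dual_limitVector [l.NeBot] (θ : Module.Dual k V) (v : ι → V) :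
    θ (limitVector k l v) = limitFunctional k l fun i => θ (v i) :=
  Module.apply_evalEquiv_symm_apply k V θ _

theorem limitVector_eq_of_eventually [l.NeBot] {v : ι → V} {u : V} (h : ∀ᶠ i in l, v i = u) :
    limitVector k l v = u :=
  eq_of_forall_dual (k := k) fun θ => by
    rw [dual_limitVector]
    exact limitFunctional_eq_of_eventually (h.mono fun _ => congrArg θ)

theorem map_limitVector_of_eventually [l.NeBot] (f : V →ₗ[k] W) {v : ι → V} {w : ι → W}
    (h : ∀ᶠ i in l, f (v i) = w i) : f (limitVector k l v) = limitVector k l w :=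
  eq_of_forall_dual (k := k) fun θ => by
    rw [← LinearMap.comp_apply, dual_limitVector, dual_limitVector]
    exact limitFunctional_congr (h.mono fun _ => congrArg θ)

end LinearLimit

section Section

variable {k : Type} [Field k] {P : Type} [Preorder P] {M : PersistenceModule k P} {A B R : Set P}

/-- A morphism from `k_R` to `M` over the points of `A`, given by the images `v y` of the
generators of `k_R`. -/
structure IsSection_s17 (M : PersistenceModule k P) (A R : Set P) (v : ∀ y, M.V y) : Prop where
  eq_zero : ∀ {y}, y ∈ A → y ∉ R → v y = 0
  map_eq : ∀ {a b} (h : a ≤ b), a ∈ A → b ∈ A → a ∈ R → M.map h (v a) = v b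

theorem IsSection_s17.mono {v : ∀ y, M.V y} (h : IsSection_s17 M B R v) (hA : A ⊆ B) :
    IsSection_s17 M A R v :=
  ⟨fun hy => h.eq_zero (hA hy), fun hab ha hb => h.map_eq hab (hA ha) (hA hb)⟩

theorem IsSection_s17.congr {R' : Set P} {v : ∀ y, M.V y} (h : IsSection_s17 M A R v)
    (hR : A ∩ R = A ∩ R') : IsSection_s17 M A R' v :=
  ⟨fun hy hy' => h.eq_zero hy fun hR' => hy' (hR.subset ⟨hy, hR'⟩).2,
    fun hab ha hb haR => h.map_eq hab ha hb (hR.superset ⟨ha, haR⟩).2⟩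

theorem exists_isSection_of_eventually [∀ y, FiniteDimensional k (M.V y)] {ι : Type*}
    (l : Filter ι) [l.NeBot] (v : ι → ∀ y, M.V y) {x : P} {u : M.V x}
    (hx : ∀ᶠ i in l, v i x = u) (hzero : ∀ y ∈ A, y ∉ R → ∀ᶠ i in l, v i y = 0)
    (hmap : ∀ {a b} (h : a ≤ b), a ∈ A → b ∈ A → a ∈ R → ∀ᶠ i in l, M.map h (v i a) = v i b) :
    ∃ w, IsSection_s17 M A R w ∧ w x = u :=
  ⟨fun y => limitVector k l fun i => v i y,
    ⟨fun hy hyR => limitVector_eq_of_eventually (hzero _ hy hyR),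
      fun h ha hb haR => map_limitVector_of_eventually _ (hmap h ha hb haR)⟩,
    limitVector_eq_of_eventually hx⟩

theorem exists_isSection_of_forall_le {s : P} (hA : ∀ a ∈ A, s ≤ a) (w : M.V s) :
    ∃ v, IsSection_s17 M A Set.univ v ∧ ∀ {y} (h : s ≤ y), v y = M.map h w := by
  classical
  have hv {y} (h : s ≤ y) : (if h : s ≤ y then M.map h w else 0) = M.map h w := dif_pos h
  refine ⟨_, ⟨fun _ hy => absurd (Set.mem_univ _) hy, fun {a b} hab ha hb _ => ?_⟩, hv⟩
  rw [hv (hA a ha), hv (hA b hb), M.map_map_s17]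

/-- The dual module, whose fibres are the dual spaces. Its sections are the morphisms from `M`
to `k_R`. -/
abbrev PersistenceModule.dual_s17 (M : PersistenceModule k P) : PersistenceModule k Pᵒᵈ where
  V x := Module.Dual k (M.V (OrderDual.ofDual x))
  map h := (M.map (OrderDual.ofDual_le_ofDual.mpr h)).dualMap
  map_refl x := by
    rw [M.map_refl]
    exact LinearMap.dualMap_id
  map_trans hxy hyz := by
    rw [M.map_trans (OrderDual.ofDual_le_ofDual.mpr hyz) (OrderDual.ofDual_le_ofDual.mpr hxy)]
    exact (LinearMap.dualMap_comp_dualMap _ _).symm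

end Section

section ZigzagOrdering

variable {L : Type*} [LinearOrder L]

theorem isConn_iff {P : Type} [Preorder P] {I : Set P} : IsConn I ↔ ∀ p ∈ I, ∀ q ∈ I,
    Relation.ReflTransGen (fun a b => a ∈ I ∧ b ∈ I ∧ (a ≤ b ∨ b ≤ a)) p q := by
  refine ⟨fun h p hp q hq => ?_, fun h p hp q hq => ?_⟩
  · obtain ⟨n, r, rfl, rfl, hrI, hr⟩ := h p hp q hq
    have hchain : Relation.ReflTransGen
        (fun i j => r i ∈ I ∧ r j ∈ I ∧ (r i ≤ r j ∨ r j ≤ r i)) 0 n :=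
      reflTransGen_of_succ_of_le _ (fun i hi => ⟨hrI i hi.2.le, hrI _ hi.2, hr i hi.2⟩) n.zero_le
    exact hchain.lift r fun _ _ h => h
  · induction h p hp q hq with
    | refl => exact ⟨0, fun _ => p, rfl, rfl, fun _ _ => hp, fun i hi => absurd hi i.not_lt_zero⟩
    | @tail b c _ hbc ih =>
      obtain ⟨n, r, hr0, hrn, hrI, hr⟩ := ih hbc.1
      refine ⟨n + 1, fun i => if i ≤ n then r i else c, ?_, ?_, fun i _ => ?_, fun i hi => ?_⟩
      · simpa using hr0
      · simp
      · by_cases hin : i ≤ n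
        · simpa [hin] using hrI i hin
        · simpa [hin] using hq
      · rcases (Nat.lt_succ_iff.mp hi).lt_or_eq with hin | rfl
        · simpa [hin.le, Nat.succ_le_of_lt hin] using hr i hin
        · simpa [hrn] using hbc.2.2

/-- A zigzag ordering of a poset: a linear ordering (pulled back along `τ`) in which any two
comparable points bound an ordering interval contained in the corresponding interval of the
poset. -/
structure IsZigzagOrdering {P : Type} [Preorder P] (τ : P → L) : Prop where
  le_of_mem_uIcc : ∀ {a b c}, a ≤ b → τ c ∈ Set.uIcc (τ a) (τ b) → a ≤ c ∧ c ≤ b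
  isConn_univ : IsConn (Set.univ : Set P)

/-- The relation of being comparable in the poset and ordered by `τ`, whose chains are the
`τ`-monotone walks. -/
def ComparableLE {P : Type} [LE P] (τ : P → L) (a b : P) : Prop :=
  τ a ≤ τ b ∧ (a ≤ b ∨ b ≤ a)

theorem le_of_reflTransGen_comparableLE {P : Type} [LE P] {τ : P → L} {x y : P}
    (h : Relation.ReflTransGen (ComparableLE τ) x y) : τ x ≤ τ y := by
  induction h with
  | refl => exact le_rfl
  | tail _ hbc ih => exact ih.trans hbc.1

namespace IsZigzagOrdering

theorem reverse {P : Type} [Preorder P] {τ : P → L} (hτ : IsZigzagOrdering τ) :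
    IsZigzagOrdering (OrderDual.toDual ∘ τ) where
  le_of_mem_uIcc h hc := hτ.le_of_mem_uIcc h <| by
    simpa only [Set.mem_uIcc, Function.comp_apply, OrderDual.toDual_le_toDual, and_comm,
      or_comm] using hc
  isConn_univ := hτ.isConn_univ

theorem dual_s17 {P : Type} [Preorder P] {τ : P → L} (hτ : IsZigzagOrdering τ) :
    IsZigzagOrdering (τ ∘ OrderDual.ofDual) where
  le_of_mem_uIcc h hc := (hτ.le_of_mem_uIcc h <| by rwa [Set.uIcc_comm]).symm
  isConn_univ p hp q hq := by
    obtain ⟨n, r, hr0, hrn, -, hr⟩ := hτ.isConn_univ p hp q hq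
    exact ⟨n, r, hr0, hrn, fun _ _ => trivial, fun i hi => (hr i hi).symm⟩

theorem reflTransGen_of_le_of_le {P : Type} [Preorder P] {τ : P → L} (hτ : IsZigzagOrdering τ)
    {x y z : P} (hxz : Relation.ReflTransGen (ComparableLE τ) x z)
    (hxy : τ x ≤ τ y) (hyz : τ y ≤ τ z) :
    Relation.ReflTransGen (ComparableLE τ) x y := by
  induction hxz with
  | refl =>
    exact .single ⟨hxy, .inl (hτ.le_of_mem_uIcc le_rfl (Set.mem_uIcc_of_le hxy hyz)).1⟩
  | @tail b c hb hbc ih =>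
    rcases le_total (τ y) (τ b) with hyb | hby
    · exact ih hyb
    · refine hb.tail ⟨hby, hbc.2.imp (fun h => ?_) fun h => ?_⟩
      · exact (hτ.le_of_mem_uIcc h (Set.mem_uIcc_of_le hby hyz)).1
      · exact (hτ.le_of_mem_uIcc h (Set.mem_uIcc_of_ge hby hyz)).2

theorem reflTransGen_of_le {P : Type} [Preorder P] {τ : P → L} (hτ : IsZigzagOrdering τ)
    {x y : P} (hxy : τ x ≤ τ y) :
    Relation.ReflTransGen (ComparableLE τ) x y := by
  induction isConn_iff.mp hτ.isConn_univ x trivial y trivial with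
  | refl => exact .refl
  | @tail b c _ hbc ih =>
    rcases le_total (τ x) (τ b) with hxb | hbx
    · rcases le_total (τ b) (τ c) with hbc' | hcb
      · exact (ih hxb).tail ⟨hbc', hbc.2.2⟩
      · exact hτ.reflTransGen_of_le_of_le (ih hxb) hxy hcb
    · refine .single ⟨hxy, hbc.2.2.imp (fun h => ?_) fun h => ?_⟩
      · exact (hτ.le_of_mem_uIcc h (Set.mem_uIcc_of_le hbx hxy)).2
      · exact (hτ.le_of_mem_uIcc h (Set.mem_uIcc_of_ge hbx hxy)).1

variable {P : Type} [PartialOrder P] {τ : P → L}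

theorem injective (hτ : IsZigzagOrdering τ) : Function.Injective τ := fun a b hab =>
  have h := hτ.le_of_mem_uIcc (le_refl a) (c := b) (by simp [hab])
  h.1.antisymm h.2

theorem isInterval (hτ : IsZigzagOrdering τ) {I : Set P} (hne : I.Nonempty)
    (hI : ∀ {a b c}, a ∈ I → b ∈ I → τ a ≤ τ c → τ c ≤ τ b → c ∈ I) : IsInterval I := by
  refine ⟨hne, fun p q r hpq hqr hp hr => ?_, isConn_iff.mpr fun p hp q hq => ?_⟩
  · have hp' : τ p ∈ Set.uIcc (τ q) (τ r) → q ∈ I := fun h =>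
      (hpq.antisymm (hτ.le_of_mem_uIcc hqr h).1) ▸ hp
    have hr' : τ r ∈ Set.uIcc (τ p) (τ q) → q ∈ I := fun h =>
      (hqr.antisymm (hτ.le_of_mem_uIcc hpq h).2) ▸ hr
    rw [Set.mem_uIcc] at hp' hr'
    grind
  · have hchain {p q : P} (hp : p ∈ I) (hq : q ∈ I) (hpq : τ p ≤ τ q) :
        Relation.ReflTransGen (fun a b => a ∈ I ∧ b ∈ I ∧ (a ≤ b ∨ b ≤ a)) p q := by
      induction hτ.reflTransGen_of_le hpq with
      | refl => exact .refl
      | @tail b c hpb hbc ih =>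
        have hpb' : τ p ≤ τ b := le_of_reflTransGen_comparableLE hpb
        have hb : b ∈ I := hI hp hq hpb' hbc.1
        exact (ih hb hpb').tail ⟨hb, hq, hbc.2⟩
    have hsymm : Std.Symm fun a b : P => a ∈ I ∧ b ∈ I ∧ (a ≤ b ∨ b ≤ a) :=
      ⟨fun _ _ h => ⟨h.2.1, h.1, h.2.2.symm⟩⟩
    exact (le_total (τ p) (τ q)).elim (hchain hp hq) fun hqp => symm (hchain hq hp hqp)

end IsZigzagOrdering
end ZigzagOrdering

section Extension

variable {k : Type} [Field k] {P : Type} [PartialOrder P] {M : PersistenceModule k P}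
  {L : Type*} [LinearOrder L] {τ : P → L}

theorem IsZigzagOrdering.exists_isSection_union (hτ : IsZigzagOrdering τ) {t : P}
    {A₁ A₂ R : Set P} {v₁ v₂ : ∀ y, M.V y} (h₁ : IsSection_s17 M A₁ R v₁) (h₂ : IsSection_s17 M A₂ R v₂)
    (hA₁ : ∀ a ∈ A₁, τ a ≤ τ t) (hA₂ : ∀ a ∈ A₂, τ t ≤ τ a) (ht₁ : t ∈ A₁) (ht₂ : t ∈ A₂)
    (htR : t ∈ R) (ht : v₁ t = v₂ t) :
    ∃ w, IsSection_s17 M (A₁ ∪ A₂) R w ∧ (∀ a ∈ A₁, w a = v₁ a) ∧ ∀ a ∈ A₂, w a = v₂ a := by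
  classical
  let w : ∀ y, M.V y := (τ ⁻¹' Set.Iic (τ t)).piecewise v₁ v₂
  have hw₁ : ∀ a ∈ A₁, w a = v₁ a := fun a ha => Set.piecewise_eq_of_mem _ _ _ (hA₁ a ha)
  have hw₂ : ∀ a ∈ A₂, w a = v₂ a := fun a ha => by
    rcases (hA₂ a ha).eq_or_lt with h | h
    · rw [← hτ.injective h, hw₁ t ht₁, ht]
    · exact Set.piecewise_eq_of_notMem _ _ _ h.not_ge
  refine ⟨w, ⟨fun {y} hy hyR => ?_, fun {a b} h ha hb haR => ?_⟩, hw₁, hw₂⟩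
  · rcases hy with hy | hy
    · rw [hw₁ y hy, h₁.eq_zero hy hyR]
    · rw [hw₂ y hy, h₂.eq_zero hy hyR]
  · rcases ha with ha | ha <;> rcases hb with hb | hb
    · rw [hw₁ a ha, hw₁ b hb, h₁.map_eq h ha hb haR]
    · have hatb := hτ.le_of_mem_uIcc h (Set.mem_uIcc_of_le (hA₁ a ha) (hA₂ b hb))
      rw [hw₁ a ha, hw₂ b hb, ← M.map_map_s17 hatb.1 hatb.2, h₁.map_eq hatb.1 ha ht₁ haR, ht,
        h₂.map_eq hatb.2 ht₂ hb htR]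
    · have hatb := hτ.le_of_mem_uIcc h (Set.mem_uIcc_of_ge (hA₁ b hb) (hA₂ a ha))
      rw [hw₂ a ha, hw₁ b hb, ← M.map_map_s17 hatb.1 hatb.2, h₂.map_eq hatb.1 ha ht₂ haR, ← ht,
        h₁.map_eq hatb.2 ht₁ hb htR]
    · rw [hw₂ a ha, hw₂ b hb, h₂.map_eq h ha hb haR]

/-- The vectors at `x` that extend to a section over the `τ`-segment from `x` to `y` with value
in `B` at `y`. -/
def extendable (τ : P → L) (M : PersistenceModule k P) (x y : P) (B : Submodule k (M.V y)) :
    Submodule k (M.V x) where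
  carrier := {u | ∃ v, IsSection_s17 M (τ ⁻¹' Set.Icc (τ x) (τ y)) Set.univ v ∧ v x = u ∧ v y ∈ B}
  zero_mem' := ⟨0, ⟨fun _ _ => rfl, fun _ _ _ _ => map_zero _⟩, rfl, B.zero_mem⟩
  add_mem' := by
    rintro _ _ ⟨v, hv, rfl, hvB⟩ ⟨w, hw, rfl, hwB⟩
    refine ⟨v + w, ⟨fun _ hy => absurd trivial hy, fun h ha hb hR => ?_⟩, rfl, B.add_mem hvB hwB⟩
    exact (map_add _ _ _).trans <| congrArg₂ _ (hv.map_eq h ha hb hR) (hw.map_eq h ha hb hR)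
  smul_mem' := by
    rintro c _ ⟨v, hv, rfl, hvB⟩
    refine ⟨c • v, ⟨fun _ hy => absurd trivial hy, fun h ha hb hR => ?_⟩, rfl, B.smul_mem c hvB⟩
    exact (map_smul _ _ _).trans <| congrArg _ (hv.map_eq h ha hb hR)

variable {x y z : P}

theorem extendable_mono {B C : Submodule k (M.V y)} (hBC : B ≤ C) :
    extendable τ M x y B ≤ extendable τ M x y C :=
  fun _ ⟨v, hv, hvx, hvy⟩ => ⟨v, hv, hvx, hBC hvy⟩

theorem extendable_self_le (B : Submodule k (M.V x)) : extendable τ M x x B ≤ B := by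
  rintro _ ⟨v, -, rfl, hvB⟩
  exact hvB

theorem extendable_extendable_le (hτ : IsZigzagOrdering τ) (hxy : τ x ≤ τ y) (hyz : τ y ≤ τ z)
    (B : Submodule k (M.V z)) :
    extendable τ M x y (extendable τ M y z B) ≤ extendable τ M x z B := by
  rintro _ ⟨v, hv, rfl, v', hv', hvv', hB⟩
  obtain ⟨w, hw, hwv, hwv'⟩ := hτ.exists_isSection_union hv hv' (fun _ h => h.2) (fun _ h => h.1)
    ⟨hxy, le_rfl⟩ ⟨le_rfl, hyz⟩ trivial hvv'.symm
  rw [← Set.preimage_union, Set.Icc_union_Icc_eq_Icc hxy hyz] at hw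
  exact ⟨w, hw, hwv x ⟨le_rfl, hxy⟩, (hwv' z ⟨hyz, le_rfl⟩).symm ▸ hB⟩

theorem comap_map_le_extendable (hτ : IsZigzagOrdering τ) (h : x ≤ y)
    (B : Submodule k (M.V y)) : B.comap (M.map h) ≤ extendable τ M x y B := fun u hu => by
  obtain ⟨v, hv, hvx⟩ := exists_isSection_of_forall_le (A := τ ⁻¹' Set.Icc (τ x) (τ y))
    (fun a ha => (hτ.le_of_mem_uIcc h (Set.mem_uIcc_of_le ha.1 ha.2)).1) u
  exact ⟨v, hv, (hvx le_rfl).trans (M.map_self_s17 x u), (hvx h).symm ▸ hu⟩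

theorem map_map_le_extendable (hτ : IsZigzagOrdering τ) (h : y ≤ x)
    (B : Submodule k (M.V y)) : B.map (M.map h) ≤ extendable τ M x y B := by
  rintro _ ⟨u, hu, rfl⟩
  obtain ⟨v, hv, hvy⟩ := exists_isSection_of_forall_le (A := τ ⁻¹' Set.Icc (τ x) (τ y))
    (fun a ha => (hτ.le_of_mem_uIcc h (Set.mem_uIcc_of_ge ha.1 ha.2)).1) u
  exact ⟨v, hv, hvy h, ((hvy le_rfl).trans (M.map_self_s17 y u)).symm ▸ hu⟩

theorem extendable_self_top (hτ : IsZigzagOrdering τ) : extendable τ M x x ⊤ = ⊤ :=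
  top_le_iff.mp (comap_map_le_extendable hτ le_rfl ⊤)

theorem dualAnnihilator_comap_le {V W : Type*} [AddCommGroup V] [Module k V] [AddCommGroup W]
    [Module k W] (f : V →ₗ[k] W) (B : Submodule k W) :
    (B.comap f).dualAnnihilator ≤ B.dualAnnihilator.map f.dualMap := by
  rw [← B.ker_mkQ, ← LinearMap.ker_comp, ← LinearMap.range_dualMap_eq_dualAnnihilator_ker,
    ← LinearMap.range_dualMap_eq_dualAnnihilator_ker, ← LinearMap.dualMap_comp_dualMap,
    LinearMap.range_comp]

theorem dualAnnihilator_map_le {V W : Type*} [AddCommGroup V] [Module k V] [AddCommGroup W]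
    [Module k W] (f : V →ₗ[k] W) (B : Submodule k V) :
    (B.map f).dualAnnihilator ≤ B.dualAnnihilator.comap f.dualMap := fun _ hφ =>
  (Submodule.mem_dualAnnihilator _).mpr fun _ hb =>
    (Submodule.mem_dualAnnihilator _).mp hφ _ (Submodule.mem_map_of_mem hb)

theorem dualAnnihilator_extendable_le_of_comparable (hτ : IsZigzagOrdering τ)
    (h : x ≤ y ∨ y ≤ x) (B : Submodule k (M.V y)) : (extendable τ M x y B).dualAnnihilator ≤
      extendable (τ ∘ OrderDual.ofDual) M.dual_s17 (.toDual x) (.toDual y) B.dualAnnihilator := by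
  rcases h with h | h
  · have hB := Submodule.dualAnnihilator_anti (comap_map_le_extendable hτ h B)
    exact (hB.trans (dualAnnihilator_comap_le _ _)).trans <|
      map_map_le_extendable (M := M.dual_s17) hτ.dual_s17 (OrderDual.toDual_le_toDual.mpr h) _
  · have hB := Submodule.dualAnnihilator_anti (map_map_le_extendable hτ h B)
    exact (hB.trans (dualAnnihilator_map_le _ _)).trans <|
      comap_map_le_extendable (M := M.dual_s17) hτ.dual_s17 (OrderDual.toDual_le_toDual.mpr h) _

theorem dualAnnihilator_extendable_le (hτ : IsZigzagOrdering τ) (hxy : τ x ≤ τ y)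
    (B : Submodule k (M.V y)) : (extendable τ M x y B).dualAnnihilator ≤
      extendable (τ ∘ OrderDual.ofDual) M.dual_s17 (.toDual x) (.toDual y) B.dualAnnihilator := by
  induction hτ.reflTransGen_of_le hxy using Relation.ReflTransGen.head_induction_on with
  | refl => exact dualAnnihilator_extendable_le_of_comparable hτ (.inl le_rfl) B
  | @head a b hab hby ih =>
    have hby' : τ b ≤ τ y := le_of_reflTransGen_comparableLE hby
    have hanti := Submodule.dualAnnihilator_anti (extendable_extendable_le hτ hab.1 hby' B)
    have hstep := dualAnnihilator_extendable_le_of_comparable hτ hab.2 (extendable τ M b y B)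
    exact hanti.trans <| hstep.trans <| (extendable_mono (ih hby')).trans <|
      extendable_extendable_le hτ.dual_s17 hab.1 hby' _

theorem extendable_bot_le_extendable_bot (hτ : IsZigzagOrdering τ) (hxy : τ x ≤ τ y)
    (hyz : τ y ≤ τ z) : extendable τ M x y ⊥ ≤ extendable τ M x z ⊥ :=
  (extendable_mono bot_le).trans (extendable_extendable_le hτ hxy hyz ⊥)

theorem extendable_top_le_extendable_top (hyz : τ y ≤ τ z) :
    extendable τ M x z ⊤ ≤ extendable τ M x y ⊤ :=
  fun _ ⟨v, hv, hvx, _⟩ =>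
    ⟨v, hv.mono (Set.preimage_mono (Set.Icc_subset_Icc_right hyz)), hvx, trivial⟩

theorem extendable_bot_total (hτ : IsZigzagOrdering τ) (hxy : τ x ≤ τ y) (hxz : τ x ≤ τ z) :
    extendable τ M x y ⊥ ≤ extendable τ M x z ⊥ ∨ extendable τ M x z ⊥ ≤ extendable τ M x y ⊥ :=
  (le_total (τ y) (τ z)).imp (extendable_bot_le_extendable_bot hτ hxy)
    (extendable_bot_le_extendable_bot hτ hxz)

theorem extendable_top_total (τ : P → L) (M : PersistenceModule k P) (x y z : P) :
    extendable τ M x y ⊤ ≤ extendable τ M x z ⊤ ∨ extendable τ M x z ⊤ ≤ extendable τ M x y ⊤ :=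
  (le_total (τ z) (τ y)).imp extendable_top_le_extendable_top extendable_top_le_extendable_top

theorem extendable_bot_le_of_le (hxy : τ x ≤ τ y) (hyz : τ y ≤ τ z) (h : z ≤ y) :
    extendable τ M x z ⊥ ≤ extendable τ M x y ⊥ := by
  rintro _ ⟨v, hv, rfl, hvz⟩
  refine ⟨v, hv.mono (Set.preimage_mono (Set.Icc_subset_Icc_right hyz)), rfl, ?_⟩
  rw [Submodule.mem_bot] at hvz ⊢
  rw [← hv.map_eq h ⟨hxy.trans hyz, le_rfl⟩ ⟨hxy, hyz⟩ trivial, hvz, map_zero]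

theorem extendable_top_le_of_le (hτ : IsZigzagOrdering τ) (hxy : τ x ≤ τ y) (hyz : τ y ≤ τ z)
    (h : y ≤ z) : extendable τ M x y ⊤ ≤ extendable τ M x z ⊤ :=
  calc extendable τ M x y ⊤
    _ ≤ extendable τ M x y (extendable τ M y z ⊤) :=
      extendable_mono (comap_map_le_extendable hτ h ⊤)
    _ ≤ extendable τ M x z ⊤ := extendable_extendable_le hτ hxy hyz ⊤

end Extension

section Splitting

theorem exists_forall_le_of_total {α β : Type*} [Preorder α] [WellFoundedLT α] {S : Set β}
    (hS : S.Nonempty) (f : β → α) (hf : ∀ y ∈ S, ∀ z ∈ S, f y ≤ f z ∨ f z ≤ f y) :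
    ∃ y ∈ S, ∀ z ∈ S, f y ≤ f z := by
  obtain ⟨_, ⟨y, hy, rfl⟩, hmin⟩ := wellFounded_lt.has_min (f '' S) (hS.image f)
  refine ⟨y, hy, fun z hz => (hf y hy z hz).elim id fun hzy => ?_⟩
  exact not_not.mp fun hyz => hmin _ ⟨z, hz, rfl⟩ (lt_of_le_not_ge hzy hyz)

theorem exists_forall_ge_of_total {α β : Type*} [Preorder α] [WellFoundedGT α] {S : Set β}
    (hS : S.Nonempty) (f : β → α) (hf : ∀ y ∈ S, ∀ z ∈ S, f y ≤ f z ∨ f z ≤ f y) :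
    ∃ y ∈ S, ∀ z ∈ S, f z ≤ f y :=
  exists_forall_le_of_total (α := αᵒᵈ) hS (OrderDual.toDual ∘ f)
    fun y hy z hz => (hf y hy z hz).symm

section InitialSegment

variable {P L : Type*} [LinearOrder L] {τ : P → L} {x : P} {R : Set P}

/-- `R` is an interval of the ordering `τ` with least element `x`. -/
structure IsInitialSegment (τ : P → L) (x : P) (R : Set P) : Prop where
  mem : x ∈ R
  subset : R ⊆ τ ⁻¹' Set.Ici (τ x)
  mem_of_le : ∀ {y z}, y ∈ R → τ x ≤ τ z → τ z ≤ τ y → z ∈ R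

theorem IsInitialSegment.lt (hR : IsInitialSegment τ x R) {y z : P} (hy : y ∈ R)
    (hz : z ∈ τ ⁻¹' Set.Ici (τ x) \ R) : τ y < τ z :=
  lt_of_not_ge fun hzy => hz.2 (hR.mem_of_le hy hz.1 hzy)

theorem IsInitialSegment.dual_s17 (hR : IsInitialSegment τ x R) :
    IsInitialSegment (τ ∘ OrderDual.ofDual) (OrderDual.toDual x) (OrderDual.ofDual ⁻¹' R) :=
  ⟨hR.mem, hR.subset, hR.mem_of_le⟩

end InitialSegment

variable {k : Type} [Field k] {P : Type} [PartialOrder P] {M : PersistenceModule k P}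
  {L : Type*} [LinearOrder L] {τ : P → L} {x : P} {R : Set P}

theorem IsInitialSegment.exists_isSection_of_forall_mem [∀ y, FiniteDimensional k (M.V y)]
    (hR : IsInitialSegment τ x R)
    (hup : ∀ {a b}, a ≤ b → a ∈ R → b ∈ τ ⁻¹' Set.Ici (τ x) → b ∈ R) {u : M.V x}
    (hu : ∀ y ∈ R, u ∈ extendable τ M x y ⊤) :
    ∃ v, IsSection_s17 M (τ ⁻¹' Set.Ici (τ x)) R v ∧ v x = u := by
  classical
  have hsec : ∀ i : ↥(τ '' R), ∃ v, IsSection_s17 M (τ ⁻¹' Set.Icc (τ x) i) Set.univ v ∧ v x = u := by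
    rintro ⟨_, y, hy, rfl⟩
    obtain ⟨v, hv, hvx, -⟩ := hu y hy
    exact ⟨v, hv, hvx⟩
  choose v hv hvx using hsec
  have : Nonempty ↥(τ '' R) := ⟨τ x, x, hR.mem, rfl⟩
  refine exists_isSection_of_eventually .atTop (fun i => R.piecewise (v i) 0)
    (.of_forall fun i => ?_) (fun y _ hyR => .of_forall fun i => ?_) fun {a b} h ha hb haR => ?_
  · rw [Set.piecewise_eq_of_mem _ _ _ hR.mem, hvx]
  · exact Set.piecewise_eq_of_notMem _ _ _ hyR
  · have hbR := hup h haR hb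
    filter_upwards [Filter.Ici_mem_atTop ⟨τ a, a, haR, rfl⟩,
      Filter.Ici_mem_atTop ⟨τ b, b, hbR, rfl⟩] with i hai hbi
    rw [Set.piecewise_eq_of_mem _ _ _ haR, Set.piecewise_eq_of_mem _ _ _ hbR,
      (hv i).map_eq h ⟨ha, hai⟩ ⟨hb, hbi⟩ trivial]

theorem IsInitialSegment.exists_isSection_of_forall_notMem [∀ y, FiniteDimensional k (M.V y)]
    (hτ : IsZigzagOrdering τ) (hR : IsInitialSegment τ x R)
    (hne : (τ ⁻¹' Set.Ici (τ x) \ R).Nonempty) {u : M.V x}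
    (hu : ∀ z ∈ τ ⁻¹' Set.Ici (τ x) \ R, u ∈ extendable τ M x z ⊥) :
    ∃ v, IsSection_s17 M (τ ⁻¹' Set.Ici (τ x)) R v ∧ v x = u := by
  classical
  have hsec : ∀ i : ↥(τ '' (τ ⁻¹' Set.Ici (τ x) \ R)), ∃ v,
      IsSection_s17 M (τ ⁻¹' Set.Icc (τ x) i) Set.univ v ∧ v x = u ∧ ∀ z, τ z = i → v z = 0 := by
    rintro ⟨_, z, hz, rfl⟩
    obtain ⟨v, hv, hvx, hvz⟩ := hu z hz
    exact ⟨v, hv, hvx, fun z' hz' => hτ.injective hz' ▸ hvz⟩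
  choose v hv hvx hvz using hsec
  have : Nonempty ↥(τ '' (τ ⁻¹' Set.Ici (τ x) \ R)) := (hne.image τ).to_subtype
  refine exists_isSection_of_eventually .atBot (fun i => R.piecewise (v i) 0)
    (.of_forall fun i => ?_) (fun y _ hyR => .of_forall fun i => ?_) fun {a b} h ha hb haR => ?_
  · rw [Set.piecewise_eq_of_mem _ _ _ hR.mem, hvx]
  · exact Set.piecewise_eq_of_notMem _ _ _ hyR
  · by_cases hbR : b ∈ R
    · refine .of_forall ?_
      rintro ⟨_, z, hz, rfl⟩
      rw [Set.piecewise_eq_of_mem _ _ _ haR, Set.piecewise_eq_of_mem _ _ _ hbR,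
        (hv _).map_eq h ⟨ha, (hR.lt haR hz).le⟩ ⟨hb, (hR.lt hbR hz).le⟩ trivial]
    · filter_upwards [Filter.Iic_mem_atBot ⟨τ b, b, ⟨hb, hbR⟩, rfl⟩]
      rintro ⟨_, z, hz, rfl⟩ hzb
      have haz : τ a ≤ τ z := (hR.lt haR hz).le
      have hazb := hτ.le_of_mem_uIcc h (Set.mem_uIcc_of_le haz hzb)
      rw [Set.piecewise_eq_of_mem _ _ _ haR, Set.piecewise_eq_of_notMem _ _ _ hbR,
        ← M.map_map_s17 hazb.1 hazb.2, (hv _).map_eq hazb.1 ⟨ha, haz⟩ ⟨hz.1, le_rfl⟩ trivial,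
        hvz _ z rfl, map_zero, Pi.zero_apply]

/-- A one-sided splitting of `M` at `x`: all vectors in `V` and all functionals vanishing on `Q`
extend from `x` to the `τ`-ray starting at `x`, as morphisms from and to `k_R`. -/
structure IsSplitting (τ : P → L) (M : PersistenceModule k P) (x : P) (R : Set P)
    (V Q : Submodule k (M.V x)) : Prop where
  isInitialSegment : IsInitialSegment τ x R
  exists_isSection : ∀ u ∈ V, ∃ v, IsSection_s17 M (τ ⁻¹' Set.Ici (τ x)) R v ∧ v x = u
  exists_isSection_dual : ∀ φ ∈ Q.dualAnnihilator, ∃ ψ, IsSection_s17 M.dual_s17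
    (τ ∘ OrderDual.ofDual ⁻¹' Set.Ici (τ x)) (OrderDual.ofDual ⁻¹' R) ψ ∧ ψ (.toDual x) = φ

theorem IsInitialSegment.exists_isSection_dual_of_forall_mem
    [∀ y, FiniteDimensional k (M.V y)] (hτ : IsZigzagOrdering τ) (hR : IsInitialSegment τ x R)
    (hdown : ∀ {a b}, a ≤ b → b ∈ R → a ∈ τ ⁻¹' Set.Ici (τ x) → a ∈ R)
    {φ : Module.Dual k (M.V x)}
    (hφ : ∀ y ∈ R, φ ∈ (extendable τ M x y ⊥).dualAnnihilator) :
    ∃ ψ, IsSection_s17 M.dual_s17 (τ ∘ OrderDual.ofDual ⁻¹' Set.Ici (τ x)) (OrderDual.ofDual ⁻¹' R) ψ ∧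
      ψ (.toDual x) = φ :=
  hR.dual_s17.exists_isSection_of_forall_mem (M := M.dual_s17) (fun h => hdown h) fun y hy =>
    extendable_mono le_top (dualAnnihilator_extendable_le hτ (hR.subset hy) ⊥ (hφ y hy))

theorem IsInitialSegment.exists_isSection_dual_of_forall_notMem
    [∀ y, FiniteDimensional k (M.V y)] (hτ : IsZigzagOrdering τ) (hR : IsInitialSegment τ x R)
    (hne : (τ ⁻¹' Set.Ici (τ x) \ R).Nonempty) {φ : Module.Dual k (M.V x)}
    (hφ : ∀ z ∈ τ ⁻¹' Set.Ici (τ x) \ R, φ ∈ (extendable τ M x z ⊤).dualAnnihilator) :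
    ∃ ψ, IsSection_s17 M.dual_s17 (τ ∘ OrderDual.ofDual ⁻¹' Set.Ici (τ x)) (OrderDual.ofDual ⁻¹' R) ψ ∧
      ψ (.toDual x) = φ :=
  hR.dual_s17.exists_isSection_of_forall_notMem (M := M.dual_s17) hτ.dual_s17 hne fun z hz =>
    extendable_mono Submodule.dualAnnihilator_top.le
      (dualAnnihilator_extendable_le hτ hz.1 ⊤ (hφ z hz))

theorem exists_isSplitting_of_not_disjoint_bot [∀ y, FiniteDimensional k (M.V y)]
    (hτ : IsZigzagOrdering τ) {U : Submodule k (M.V x)} {z : P} (hz : τ x ≤ τ z)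
    (hzU : ¬ Disjoint (extendable τ M x z ⊥) U) :
    ∃ R V Q, IsSplitting τ M x R V Q ∧ ¬ Disjoint V U ∧ Disjoint Q U := by
  let R : Set P := {y | τ x ≤ τ y ∧ Disjoint (extendable τ M x y ⊥) U}
  have hR : IsInitialSegment τ x R :=
    { mem := ⟨le_rfl, disjoint_bot_left.mono_left (extendable_self_le ⊥)⟩
      subset := fun y hy => hy.1
      mem_of_le := fun hy hxz hzy =>
        ⟨hxz, hy.2.mono_left (extendable_bot_le_extendable_bot hτ hxz hzy)⟩ }
  have hdown {a b : P} (hab : a ≤ b) (hb : b ∈ R) (ha : τ x ≤ τ a) : a ∈ R := by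
    rcases le_total (τ a) (τ b) with h | h
    · exact hR.mem_of_le hb ha h
    · exact ⟨ha, hb.2.mono_left (extendable_bot_le_of_le hb.1 h hab)⟩
  have hne : (τ ⁻¹' Set.Ici (τ x) \ R).Nonempty := ⟨z, hz, fun h => hzU h.2⟩
  obtain ⟨z₀, hz₀, hmin⟩ := exists_forall_le_of_total hne (extendable τ M x · ⊥)
    fun _ hy _ hz => extendable_bot_total hτ hy.1 hz.1
  obtain ⟨y₀, hy₀, hmax⟩ := exists_forall_ge_of_total ⟨x, hR.mem⟩ (extendable τ M x · ⊥)
    fun _ hy _ hz => extendable_bot_total hτ hy.1 hz.1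
  refine ⟨R, extendable τ M x z₀ ⊥, extendable τ M x y₀ ⊥, ⟨hR, fun u hu => ?_, fun φ hφ => ?_⟩,
    fun h => hz₀.2 ⟨hz₀.1, h⟩, hy₀.2⟩
  · exact hR.exists_isSection_of_forall_notMem hτ hne fun z hz => hmin z hz hu
  · exact hR.exists_isSection_dual_of_forall_mem hτ hdown fun y hy =>
      Submodule.dualAnnihilator_anti (hmax y hy) hφ

theorem exists_isSplitting_of_disjoint_top [∀ y, FiniteDimensional k (M.V y)]
    (hτ : IsZigzagOrdering τ) {U : Submodule k (M.V x)} (hU : U ≠ ⊥) {z : P} (hz : τ x ≤ τ z)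
    (hzU : Disjoint (extendable τ M x z ⊤) U) :
    ∃ R V Q, IsSplitting τ M x R V Q ∧ ¬ Disjoint V U ∧ Disjoint Q U := by
  let R : Set P := {y | τ x ≤ τ y ∧ ¬ Disjoint (extendable τ M x y ⊤) U}
  have hR : IsInitialSegment τ x R :=
    { mem := ⟨le_rfl, by rwa [extendable_self_top hτ, top_disjoint]⟩
      subset := fun y hy => hy.1
      mem_of_le := fun hy hxz hzy =>
        ⟨hxz, fun h => hy.2 (h.mono_left (extendable_top_le_extendable_top hzy))⟩ }
  have hup {a b : P} (hab : a ≤ b) (ha : a ∈ R) (hb : τ x ≤ τ b) : b ∈ R := by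
    rcases le_total (τ a) (τ b) with h | h
    · exact ⟨hb, fun h' => ha.2 (h'.mono_left (extendable_top_le_of_le hτ ha.1 h hab))⟩
    · exact hR.mem_of_le ha hb h
  have hne : (τ ⁻¹' Set.Ici (τ x) \ R).Nonempty := ⟨z, hz, fun h => h.2 hzU⟩
  obtain ⟨y₀, hy₀, hmin⟩ := exists_forall_le_of_total ⟨x, hR.mem⟩ (extendable τ M x · ⊤)
    fun y _ z _ => extendable_top_total τ M x y z
  obtain ⟨z₀, hz₀, hmax⟩ := exists_forall_ge_of_total hne (extendable τ M x · ⊤)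
    fun y _ z _ => extendable_top_total τ M x y z
  refine ⟨R, extendable τ M x y₀ ⊤, extendable τ M x z₀ ⊤, ⟨hR, fun u hu => ?_, fun φ hφ => ?_⟩,
    hy₀.2, not_not.mp fun h => hz₀.2 ⟨hz₀.1, h⟩⟩
  · exact hR.exists_isSection_of_forall_mem hup fun y hy => hmin y hy hu
  · exact hR.exists_isSection_dual_of_forall_notMem hτ hne fun z hz =>
      Submodule.dualAnnihilator_anti (hmax z hz) hφ

theorem exists_isSplitting_of_forall [∀ y, FiniteDimensional k (M.V y)]
    (hτ : IsZigzagOrdering τ) {U : Submodule k (M.V x)}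
    (hK : ∀ z, τ x ≤ τ z → Disjoint (extendable τ M x z ⊥) U)
    (hD : ∀ z, τ x ≤ τ z → ¬ Disjoint (extendable τ M x z ⊤) U) :
    ∃ R V Q, IsSplitting τ M x R V Q ∧ ¬ Disjoint V U ∧ Disjoint Q U := by
  let R : Set P := τ ⁻¹' Set.Ici (τ x)
  have hR : IsInitialSegment τ x R := ⟨le_rfl, subset_rfl, fun _ hxz _ => hxz⟩
  obtain ⟨y₀, hy₀, hmin⟩ := exists_forall_le_of_total ⟨x, hR.mem⟩ (extendable τ M x · ⊤)
    fun y _ z _ => extendable_top_total τ M x y z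
  obtain ⟨z₀, hz₀, hmax⟩ := exists_forall_ge_of_total ⟨x, hR.mem⟩ (extendable τ M x · ⊥)
    fun _ hy _ hz => extendable_bot_total hτ (hR.subset hy) (hR.subset hz)
  refine ⟨R, extendable τ M x y₀ ⊤, extendable τ M x z₀ ⊥, ⟨hR, fun u hu => ?_, fun φ hφ => ?_⟩,
    hD y₀ hy₀, hK z₀ hz₀⟩
  · exact hR.exists_isSection_of_forall_mem (fun _ _ hb => hb) fun y hy => hmin y hy hu
  · exact hR.exists_isSection_dual_of_forall_mem hτ (fun _ _ ha => ha) fun y hy =>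
      Submodule.dualAnnihilator_anti (hmax y hy) hφ

theorem exists_isSplitting [∀ y, FiniteDimensional k (M.V y)] (hτ : IsZigzagOrdering τ) (x : P)
    {U : Submodule k (M.V x)} (hU : U ≠ ⊥) :
    ∃ R V Q, IsSplitting τ M x R V Q ∧ ¬ Disjoint V U ∧ Disjoint Q U := by
  by_cases! hK : ∃ z, τ x ≤ τ z ∧ ¬ Disjoint (extendable τ M x z ⊥) U
  · obtain ⟨z, hz, hzU⟩ := hK
    exact exists_isSplitting_of_not_disjoint_bot hτ hz hzU
  by_cases! hD : ∃ z, τ x ≤ τ z ∧ Disjoint (extendable τ M x z ⊤) U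
  · obtain ⟨z, hz, hzU⟩ := hD
    exact exists_isSplitting_of_disjoint_top hτ hU hz hzU
  exact exists_isSplitting_of_forall hτ hK hD

end Splitting

section Summand

theorem nonempty_intervalSummand_of_isSection {k : Type} [Field k] {P : Type} [Preorder P]
    {M : PersistenceModule k P} {I : Set P} (hI : IsInterval I) {v : ∀ y, M.V y}
    (hv : IsSection_s17 M Set.univ I v) {ψ : ∀ y, M.dual_s17.V y}
    (hψ : IsSection_s17 M.dual_s17 Set.univ (OrderDual.ofDual ⁻¹' I) ψ) {x : P} (hx : x ∈ I)
    (hxv : ψ (.toDual x) (v x) = 1) : Nonempty (IntervalSummand M) := by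
  have hψmap {a b : P} (h : a ≤ b) (hb : b ∈ I) (m : M.V a) :
      ψ (.toDual b) (M.map h m) = ψ (.toDual a) m :=
    LinearMap.congr_fun (hψ.map_eq (OrderDual.toDual_le_toDual.mpr h) trivial trivial hb) m
  have hpair {a b : P} (h : a ≤ b) (ha : a ∈ I) (hb : b ∈ I) :
      ψ (.toDual b) (v b) = ψ (.toDual a) (v a) := by
    rw [← hv.map_eq h trivial trivial ha, hψmap h hb]
  refine ⟨⟨I, hI, v, fun y => ψ (.toDual y), fun hy => hv.eq_zero trivial hy,
    fun h ha => hv.map_eq h trivial trivial ha, fun hy => hψ.eq_zero trivial hy, hψmap,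
    fun {y} hy => ?_⟩⟩
  induction isConn_iff.mp hI.2.2 x hx y hy with
  | refl => exact hxv
  | tail _ hbc ih =>
    obtain ⟨hb, hc, h | h⟩ := hbc
    · exact (hpair h hb hc).trans (ih hb)
    · exact (hpair h hc hb).symm.trans (ih hb)

variable {k : Type} [Field k] {P : Type} [PartialOrder P] {M : PersistenceModule k P}
  {L : Type*} [LinearOrder L] {τ : P → L} {x : P} {S R : Set P}

theorem IsZigzagOrdering.isInterval_union (hτ : IsZigzagOrdering τ)
    (hS : IsInitialSegment (OrderDual.toDual ∘ τ) x S) (hR : IsInitialSegment τ x R) :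
    IsInterval (S ∪ R) :=
  hτ.isInterval ⟨x, .inl hS.mem⟩ fun {a b c} ha hb hac hcb => by
    rcases le_total (τ c) (τ x) with hcx | hxc
    · rcases ha with ha | ha
      · exact .inl (hS.mem_of_le ha hcx hac)
      · exact .inl (hS.mem_of_le hS.mem hcx ((hR.subset ha).trans hac))
    · rcases hb with hb | hb
      · exact .inr (hR.mem_of_le hR.mem hxc (hcb.trans (hS.subset hb)))
      · exact .inr (hR.mem_of_le hb hxc hcb)

theorem IsZigzagOrdering.exists_isSection_univ (hτ : IsZigzagOrdering τ)
    (hS : IsInitialSegment (OrderDual.toDual ∘ τ) x S) (hR : IsInitialSegment τ x R)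
    {v w : ∀ y, M.V y} (hv : IsSection_s17 M (τ ⁻¹' Set.Iic (τ x)) S v)
    (hw : IsSection_s17 M (τ ⁻¹' Set.Ici (τ x)) R w) (hvw : v x = w x) :
    ∃ r, IsSection_s17 M Set.univ (S ∪ R) r ∧ r x = w x := by
  have hS' : τ ⁻¹' Set.Iic (τ x) ∩ S = τ ⁻¹' Set.Iic (τ x) ∩ (S ∪ R) := by
    refine subset_antisymm (Set.inter_subset_inter_right _ Set.subset_union_left) ?_
    rintro y ⟨hy, hyS | hyR⟩
    · exact ⟨hy, hyS⟩
    · exact ⟨hy, hτ.injective (le_antisymm (hR.subset hyR) hy) ▸ hS.mem⟩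
  have hR' : τ ⁻¹' Set.Ici (τ x) ∩ R = τ ⁻¹' Set.Ici (τ x) ∩ (S ∪ R) := by
    refine subset_antisymm (Set.inter_subset_inter_right _ Set.subset_union_right) ?_
    rintro y ⟨hy, hyS | hyR⟩
    · exact ⟨hy, hτ.injective (le_antisymm hy (hS.subset hyS)) ▸ hR.mem⟩
    · exact ⟨hy, hyR⟩
  obtain ⟨r, hr, -, hrw⟩ := hτ.exists_isSection_union (hv.congr hS') (hw.congr hR')
    (fun _ h => h) (fun _ h => h) le_rfl le_rfl (.inl hS.mem) hvw
  rw [← Set.preimage_union, Set.Iic_union_Ici, Set.preimage_univ] at hr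
  exact ⟨r, hr, hrw x le_rfl⟩

theorem IsZigzagOrdering.nonempty_intervalSummand (hτ : IsZigzagOrdering τ)
    [∀ y, FiniteDimensional k (M.V y)] (hM : ¬ IsZero M) : Nonempty (IntervalSummand M) := by
  obtain ⟨x, m, hm⟩ : ∃ x, ∃ m : M.V x, m ≠ 0 := by simpa only [IsZero, not_forall] using hM
  have htop : (⊤ : Submodule k (M.V x)) ≠ ⊥ := fun h =>
    hm ((Submodule.eq_bot_iff _).mp h m Submodule.mem_top)
  obtain ⟨S, V, Q, hS, hV, hQ⟩ := exists_isSplitting hτ.reverse x htop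
  rw [disjoint_top] at hV hQ
  obtain ⟨R, V', Q', hR, hV', hQ'⟩ := exists_isSplitting hτ x hV
  obtain ⟨u, huV', huV, hu⟩ : ∃ u ∈ V', u ∈ V ∧ u ≠ 0 := by
    simpa only [Submodule.disjoint_def, not_forall, exists_prop] using hV'
  obtain ⟨φ, hφu, hφ⟩ : ∃ φ : Module.Dual k (M.V x), φ u = 1 ∧ φ ∈ Q'.dualAnnihilator := by
    obtain ⟨φ, hφu, hφ⟩ := Submodule.exists_le_ker_of_notMem fun h =>
      hu (Submodule.disjoint_def.mp hQ' u h huV)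
    exact ⟨(φ u)⁻¹ • φ, inv_mul_cancel₀ hφu, Submodule.smul_mem _ _ <|
      (Submodule.mem_dualAnnihilator φ).mpr hφ⟩
  obtain ⟨v, hv, hvu⟩ := hS.exists_isSection u huV
  obtain ⟨w, hw, hwu⟩ := hR.exists_isSection u huV'
  obtain ⟨ψ, hψ, hψφ⟩ := hS.exists_isSection_dual φ (by simp [hQ])
  obtain ⟨χ, hχ, hχφ⟩ := hR.exists_isSection_dual φ hφ
  have hSi := hS.isInitialSegment
  have hRi := hR.isInitialSegment
  obtain ⟨r, hr, hrx⟩ := hτ.exists_isSection_univ hSi hRi hv hw (hvu.trans hwu.symm)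
  obtain ⟨ρ, hρ, hρx⟩ :=
    hτ.dual_s17.exists_isSection_univ hSi.dual_s17 hRi.dual_s17 hψ hχ (hψφ.trans hχφ.symm)
  refine nonempty_intervalSummand_of_isSection (hτ.isInterval_union hSi hRi) hr hρ
    (.inl hSi.mem) ?_
  rw [hrx, hwu, hρx, hχφ]
  exact hφu

end Summand

section Zset

variable {γ : ℤ → ℤ × ℤ}

theorem IsZigzagPath.monotone_fst (hγ : IsZigzagPath γ) : Monotone fun i => (γ i).1 :=
  monotone_int_of_le_succ fun i => by rcases hγ.1 i with h | h <;> simp [h]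

theorem IsZigzagPath.antitone_snd (hγ : IsZigzagPath γ) : Antitone fun i => (γ i).2 :=
  antitone_int_of_succ_le fun i => by rcases hγ.1 i with h | h <;> simp [h]

theorem IsZigzagPath.exists_bounds (hγ : IsZigzagPath γ) (p : Zset γ) : ∃ i : ℤ,
    ((γ i).1 ≤ p.1.1 ∧ p.1.1 ≤ (γ (i + 1)).1) ∧ (γ (i + 1)).2 ≤ p.1.2 ∧ p.1.2 ≤ (γ i).2 := by
  obtain ⟨i, ⟨h₁, h₂⟩ | ⟨h₁, h₂⟩⟩ := p.2
  · have hsnd : ((γ (i + 1)).2 : ℝ) ≤ (γ i).2 := Int.cast_le.mpr (hγ.antitone_snd (by lia))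
    exact ⟨i, ⟨h₁.1, h₂.1⟩, hsnd.trans h₁.2, h₂.2.trans hsnd⟩
  · have hfst : ((γ i).1 : ℝ) ≤ (γ (i + 1)).1 := Int.cast_le.mpr (hγ.monotone_fst (by lia))
    exact ⟨i, ⟨hfst.trans h₁.1, h₂.1.trans hfst⟩, h₁.2, h₂.2⟩

theorem IsZigzagPath.southeast_total (hγ : IsZigzagPath γ) (p q : Zset γ) :
    (p.1.1 ≤ q.1.1 ∧ q.1.2 ≤ p.1.2) ∨ (q.1.1 ≤ p.1.1 ∧ p.1.2 ≤ q.1.2) := by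
  obtain ⟨i, hp₁, hp₂⟩ := hγ.exists_bounds p
  obtain ⟨j, hq₁, hq₂⟩ := hγ.exists_bounds q
  have hlt {i j : ℤ} (h : i < j) : ((γ (i + 1)).1 : ℝ) ≤ (γ j).1 ∧ ((γ j).2 : ℝ) ≤ (γ (i + 1)).2 :=
    ⟨Int.cast_le.mpr (hγ.monotone_fst h), Int.cast_le.mpr (hγ.antitone_snd h)⟩
  rcases lt_trichotomy i j with h | rfl | h
  · exact .inl ⟨by linarith [hlt h], by linarith [hlt h]⟩
  · rcases hγ.1 i with h | h
    · have hi : (γ (i + 1)).2 = (γ i).2 := by simp [h]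
      rw [hi] at hp₂ hq₂
      grind
    · have hi : (γ (i + 1)).1 = (γ i).1 := by simp [h]
      rw [hi] at hp₁ hq₁
      grind
  · exact .inr ⟨by linarith [hlt h], by linarith [hlt h]⟩

theorem IsZigzagPath.southeast_of_le (hγ : IsZigzagPath γ) {p q : Zset γ}
    (h : p.1.1 - p.1.2 ≤ q.1.1 - q.1.2) : p.1.1 ≤ q.1.1 ∧ q.1.2 ≤ p.1.2 :=
  (hγ.southeast_total p q).elim id fun hqp => ⟨by linarith, by linarith⟩

theorem IsZigzagPath.coe_mem_zset (hγ : IsZigzagPath γ) (i : ℤ) :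
    (((γ i).1 : ℝ), ((γ i).2 : ℝ)) ∈ Zset γ := by
  refine ⟨i, (hγ.1 i).imp (fun h => ⟨le_rfl, ?_⟩) fun h => ⟨?_, le_rfl⟩⟩
  all_goals constructor <;> simp [h]

/-- The vertex `γ i` as a point of the zigzag subposet. -/
def IsZigzagPath.vertex (hγ : IsZigzagPath γ) (i : ℤ) : Zset γ :=
  ⟨((γ i).1, (γ i).2), hγ.coe_mem_zset i⟩

theorem IsZigzagPath.vertex_comparable (hγ : IsZigzagPath γ) (i : ℤ) :
    hγ.vertex i ≤ hγ.vertex (i + 1) ∨ hγ.vertex (i + 1) ≤ hγ.vertex i := by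
  rcases hγ.1 i with h | h
  · exact .inl (by constructor <;> simp [vertex, h])
  · exact .inr (by constructor <;> simp [vertex, h])

theorem IsZigzagPath.isConn_univ (hγ : IsZigzagPath γ) : IsConn (Set.univ : Set (Zset γ)) := by
  have hvertex (p : Zset γ) : ∃ i, hγ.vertex i ≤ p ∨ p ≤ hγ.vertex i := by
    obtain ⟨i, h | h⟩ := p.2
    · exact ⟨i, .inl h.1⟩
    · exact ⟨i, .inr h.2⟩
  refine isConn_iff.mpr fun p _ q _ => ?_
  obtain ⟨i, hi⟩ := hvertex p
  obtain ⟨j, hj⟩ := hvertex q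
  have hij : Relation.ReflTransGen
      (fun i j => hγ.vertex i ≤ hγ.vertex j ∨ hγ.vertex j ≤ hγ.vertex i) i j :=
    reflTransGen_of_succ _ (fun l _ => hγ.vertex_comparable l)
      fun l _ => (hγ.vertex_comparable l).symm
  exact .head ⟨trivial, trivial, hi.symm⟩ <|
    (hij.lift hγ.vertex fun _ _ h => ⟨trivial, trivial, h⟩).tail ⟨trivial, trivial, hj⟩

theorem IsZigzagPath.isZigzagOrdering (hγ : IsZigzagPath γ) :
    IsZigzagOrdering fun p : Zset γ => p.1.1 - p.1.2 where
  le_of_mem_uIcc {a b c} hab hc := by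
    have hab₁ : a.1.1 ≤ b.1.1 := hab.1
    have hab₂ : a.1.2 ≤ b.1.2 := hab.2
    rcases Set.mem_uIcc.mp hc with ⟨h₁, h₂⟩ | ⟨h₁, h₂⟩
    all_goals
      have hse₁ := hγ.southeast_of_le h₁
      have hse₂ := hγ.southeast_of_le h₂
      exact ⟨⟨by linarith, by linarith⟩, by linarith, by linarith⟩
  isConn_univ := hγ.isConn_univ

end Zset

end PMod

open PMod in
theorem stmt17_general {k : Type} [Field k] {P : Type} [PartialOrder P] {L : Type*}
    [LinearOrder L] {τ : P → L} (hτ : IsZigzagOrdering τ) (M : PersistenceModule k P)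
    [∀ p, FiniteDimensional k (M.V p)] :
    ∃ (ι : Type) (I : ι → Set P) (hI : ∀ i, IsInterval (I i)),
      Isomorphic M (directSum fun i => intervalModule k (I i) ((hI i).2.1)) :=
  exists_isomorphic_directSum_intervalModule (fun _ _ hN => hτ.nonempty_intervalSummand hN) M

open PMod in
/-- Corollary 4.7: pointwise finite-dimensional persistence modules over a zigzag
subposet of `ℝ²` decompose into interval modules. -/
theorem stmt17 {k : Type} [Field k] (γ : ℤ → ℤ × ℤ) (hγ : IsZigzagPath γ)
    (M : PersistenceModule k ↥(Zset γ)) (hfd : ∀ p, FiniteDimensional k (M.V p)) :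
    ∃ (ι : Type) (I : ι → Set ↥(Zset γ)) (hI : ∀ i, IsInterval (I i)),
      Isomorphic M (directSum fun i => intervalModule k (I i) ((hI i).2.1)) :=
  stmt17_general hγ.isZigzagOrdering M
end

section
/- Let k be a field and M : ℝ² → Vec_k a persistence module such that for every (i,j) ∈ ℤ² the restriction of M to the square [i, i+1] × [j, j+1] is middle exact. Then M is middle exact on all of ℝ². -/
namespace PMod

/-- Exactness in the middle of the sequence attached to the rectangle with corners
`(x,y)`, `(x,y')`, `(x',y)`, `(x',y')` in `ℝ²`. -/
def RectExact {k : Type} [Field k] (M : PersistenceModule k (ℝ × ℝ))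
    (x x' y y' : ℝ) (hx : x ≤ x') (hy : y ≤ y') : Prop :=
  ∀ (mb : M.V (x, y')) (mc : M.V (x', y)),
    M.map (show ((x, y') : ℝ × ℝ) ≤ (x', y') from ⟨hx, le_refl y'⟩) mb =
      M.map (show ((x', y) : ℝ × ℝ) ≤ (x', y') from ⟨le_refl x', hy⟩) mc →
    ∃ ma : M.V (x, y),
      M.map (show ((x, y) : ℝ × ℝ) ≤ (x, y') from ⟨le_refl x, hy⟩) ma = mb ∧
      M.map (show ((x, y) : ℝ × ℝ) ≤ (x', y) from ⟨hx, le_refl y⟩) ma = mc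

end PMod

/-!
Middle exactness at a rectangle says that its four corners form a weak pullback square, and weak
pullback squares paste, horizontally and vertically. Cutting the `x`-sides of a rectangle at
the grid points, and then its `y`-sides, reduces the claim to rectangles lying in a single cell.
-/

namespace PMod

section WeakPullback

/-- The square of functions `f : A → B`, `g : A → C`, `h : B → D`, `l : C → D` is a weak pullback
as far as existence of lifts goes: every pair in `B × C` that agrees in `D` comes from `A`.
Commutativity is not part of the definition. For linear maps in a commuting square this is
exactness of `A → B ⊕ C → D` in the middle. -/
def IsWeakPullback {A B C D : Type*} (f : A → B) (g : A → C) (h : B → D) (l : C → D) : Prop :=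
  ∀ b c, h b = l c → ∃ a, f a = b ∧ g a = c

variable {A B C D E F : Type*} {f : A → B} {g : A → C} {h : B → D} {l : C → D}

theorem IsWeakPullback.symm (H : IsWeakPullback f g h l) : IsWeakPullback g f l h := by
  intro c b hcb
  obtain ⟨a, hab, hac⟩ := H b c hcb.symm
  exact ⟨a, hac, hab⟩

theorem IsWeakPullback.paste {g' : C → E} {h' : D → F} {l' : E → F}
    (H : IsWeakPullback f g h l) (H' : IsWeakPullback l g' h' l') :
    IsWeakPullback f (g' ∘ g) (h' ∘ h) l' := by
  intro b e hbe
  obtain ⟨c, hcd, hce⟩ := H' (h b) e hbe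
  obtain ⟨a, hab, hac⟩ := H b c hcd.symm
  exact ⟨a, hab, (congrArg g' hac).trans hce⟩

end WeakPullback

section Rectangle

variable {k S T : Type} [Field k] [Preorder S] [Preorder T] {M : PersistenceModule k (S × T)}

/-- Middle exactness of `M` at the single rectangle with sides `[x, x']` and `[y, y']`;
`MiddleExact M` asks for this at all rectangles, and `RectExact` is the case `S = T = ℝ`. -/
def MiddleExactAt (M : PersistenceModule k (S × T)) {x x' : S} {y y' : T}
    (hx : x ≤ x') (hy : y ≤ y') : Prop :=
  IsWeakPullback
    (M.map (Prod.mk_le_mk_iff_right.2 hy : (x, y) ≤ (x, y')))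
    (M.map (Prod.mk_le_mk_iff_left.2 hx : (x, y) ≤ (x', y)))
    (M.map (Prod.mk_le_mk_iff_left.2 hx : (x, y') ≤ (x', y')))
    (M.map (Prod.mk_le_mk_iff_right.2 hy : (x', y) ≤ (x', y')))

theorem PersistenceModule.coe_map_trans {P : Type} [Preorder P] (N : PersistenceModule k P)
    {p q r : P} (hpq : p ≤ q) (hqr : q ≤ r) :
    ⇑(N.map (hpq.trans hqr)) = N.map hqr ∘ N.map hpq := by
  rw [N.map_trans hpq hqr, LinearMap.coe_comp]

theorem MiddleExactAt.paste_fst {x₁ x₂ x₃ : S} {y y' : T} {h₁₂ : x₁ ≤ x₂} {h₂₃ : x₂ ≤ x₃}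
    {hy : y ≤ y'} (H₁₂ : MiddleExactAt M h₁₂ hy) (H₂₃ : MiddleExactAt M h₂₃ hy) :
    MiddleExactAt M (h₁₂.trans h₂₃) hy := by
  have H := IsWeakPullback.paste H₁₂ H₂₃
  rwa [← M.coe_map_trans, ← M.coe_map_trans] at H

theorem MiddleExactAt.paste_snd {x x' : S} {y₁ y₂ y₃ : T} {hx : x ≤ x'} {h₁₂ : y₁ ≤ y₂}
    {h₂₃ : y₂ ≤ y₃} (H₁₂ : MiddleExactAt M hx h₁₂) (H₂₃ : MiddleExactAt M hx h₂₃) :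
    MiddleExactAt M hx (h₁₂.trans h₂₃) := by
  have H := (IsWeakPullback.symm H₁₂).paste (IsWeakPullback.symm H₂₃)
  rw [← M.coe_map_trans, ← M.coe_map_trans] at H
  exact H.symm

end Rectangle

section Grid

open Order

variable {ι S : Type*}

/-- A grid in `S`: a monotone family of points, coinitial and cofinal in `S`. Its cells are the
intervals `[s i, s (succ i)]`. -/
structure IsGrid [Preorder ι] [Preorder S] (s : ι → S) : Prop where
  monotone : Monotone s
  exists_le : ∀ x, ∃ i, s i ≤ x
  exists_ge : ∀ x, ∃ i, x ≤ s i

theorem isGrid_intCast (R : Type*) [Ring R] [LinearOrder R] [IsOrderedRing R] [FloorRing R] :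
    IsGrid (Int.cast : ℤ → R) where
  monotone := Int.cast_mono
  exists_le x := ⟨⌊x⌋, Int.floor_le x⟩
  exists_ge x := ⟨⌈x⌉, Int.le_ceil x⟩

variable [LinearOrder S] {s : ι → S} {r : S → S → Prop} [IsTrans S r]

theorem rel_of_forall_cell_between [Preorder ι] [SuccOrder ι] [IsSuccArchimedean ι]
    (hs : Monotone s) (hcell : ∀ i x x', x ≤ x' → s i ≤ x → x' ≤ s (succ i) → r x x')
    {i j : ι} (hij : i ≤ j) {x x' : S} (hx : x ≤ x') (hi : s i ≤ x) (hj : x' ≤ s j) : r x x' := by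
  induction hij using Succ.rec generalizing x x' with
  | rfl => exact hcell i x x' hx hi (hj.trans (hs (le_succ i)))
  | succ j _ ih =>
    rcases le_total x' (s j) with hx'j | hjx'
    · exact ih hx hi hx'j
    rcases le_total (s j) x with hjx | hxj
    · exact hcell j x x' hx hjx hj
    · exact trans_of r (ih hxj hi le_rfl) (hcell j (s j) x' hjx' le_rfl hj)

theorem IsGrid.rel_of_forall_cell [LinearOrder ι] [SuccOrder ι] [IsSuccArchimedean ι]
    (hs : IsGrid s) (hcell : ∀ i x x', x ≤ x' → s i ≤ x → x' ≤ s (succ i) → r x x')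
    {x x' : S} (hx : x ≤ x') : r x x' := by
  obtain ⟨i, hi⟩ := hs.exists_le x
  obtain ⟨j, hj⟩ := hs.exists_ge x'
  exact rel_of_forall_cell_between hs.monotone hcell (le_max_left i j) hx hi
    (hj.trans (hs.monotone (le_max_right i j)))

end Grid

section GridRectangle

open Order

variable {k S T : Type} {ι : Type*} [Field k]
  [LinearOrder ι] [SuccOrder ι] [IsSuccArchimedean ι]

theorem IsGrid.middleExactAt_fst [LinearOrder S] [Preorder T] {M : PersistenceModule k (S × T)}
    {s : ι → S} (hs : IsGrid s) {y y' : T} (hy : y ≤ y')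
    (hcell : ∀ i x x' (hx : x ≤ x'), s i ≤ x → x' ≤ s (succ i) → MiddleExactAt M hx hy)
    {x x' : S} (hx : x ≤ x') : MiddleExactAt M hx hy := by
  let r (x x' : S) : Prop := ∃ hx : x ≤ x', MiddleExactAt M hx hy
  have : IsTrans S r := ⟨fun _ _ _ ⟨_, H⟩ ⟨_, H'⟩ ↦ ⟨_, H.paste_fst H'⟩⟩
  have hr : r x x' := hs.rel_of_forall_cell
    (fun i x x' hx hi hi' ↦ ⟨hx, hcell i x x' hx hi hi'⟩) hx
  exact hr.2

theorem IsGrid.middleExactAt_snd [Preorder S] [LinearOrder T] {M : PersistenceModule k (S × T)}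
    {t : ι → T} (ht : IsGrid t) {x x' : S} (hx : x ≤ x')
    (hcell : ∀ j y y' (hy : y ≤ y'), t j ≤ y → y' ≤ t (succ j) → MiddleExactAt M hx hy)
    {y y' : T} (hy : y ≤ y') : MiddleExactAt M hx hy := by
  let r (y y' : T) : Prop := ∃ hy : y ≤ y', MiddleExactAt M hx hy
  have : IsTrans T r := ⟨fun _ _ _ ⟨_, H⟩ ⟨_, H'⟩ ↦ ⟨_, H.paste_snd H'⟩⟩
  have hr : r y y' := ht.rel_of_forall_cell
    (fun j y y' hy hj hj' ↦ ⟨hy, hcell j y y' hy hj hj'⟩) hy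
  exact hr.2

end GridRectangle

end PMod

open PMod Order in
theorem stmt18_general {k S T : Type} {ι κ : Type*} [Field k] [LinearOrder S] [LinearOrder T]
    [LinearOrder ι] [SuccOrder ι] [IsSuccArchimedean ι]
    [LinearOrder κ] [SuccOrder κ] [IsSuccArchimedean κ]
    (M : PersistenceModule k (S × T)) {s : ι → S} {t : κ → T} (hs : IsGrid s) (ht : IsGrid t)
    (hloc : ∀ i j x x' y y' (hx : x ≤ x') (hy : y ≤ y'),
      s i ≤ x → x' ≤ s (succ i) → t j ≤ y → y' ≤ t (succ j) → MiddleExactAt M hx hy) :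
    MiddleExact M := by
  intro x x' y y' hx hy
  have hstrip (i) (x x' : S) (hx : x ≤ x') (hi : s i ≤ x) (hi' : x' ≤ s (succ i)) :
      MiddleExactAt M hx hy :=
    ht.middleExactAt_snd hx (fun j y y' hy ↦ hloc i j x x' y y' hx hy hi hi') hy
  exact hs.middleExactAt_fst hy hstrip hx

open PMod in
/-- Lemma 4.8: a persistence module over `ℝ²` which is middle exact on each unit
square with integer corners is middle exact. -/
theorem stmt18 {k : Type} [Field k] (M : PersistenceModule k (ℝ × ℝ))
    (hloc : ∀ (i j : ℤ) (x x' y y' : ℝ) (hx : x ≤ x') (hy : y ≤ y'),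
      (i : ℝ) ≤ x → x' ≤ (i : ℝ) + 1 → (j : ℝ) ≤ y → y' ≤ (j : ℝ) + 1 →
      RectExact M x x' y y' hx hy) :
    ∀ (x x' y y' : ℝ) (hx : x ≤ x') (hy : y ≤ y'), RectExact M x x' y y' hx hy :=
  stmt18_general M (isGrid_intCast ℝ) (isGrid_intCast ℝ)
    fun i j x x' y y' hx hy hi hi' hj hj' ↦
      hloc i j x x' y y' hx hy hi (by simpa using hi') hj (by simpa using hj')
end
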